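/- Let 𝒫 be the Poissonized discrete distribution model on ℕ^k: 𝒫 = { ∏_{j=1}^k Poi(p_j) : p_j ≥ 0, Σ_{j=1}^k p_j = 1 }. There exist absolute constants c₁ > 0, C₁ > 0 and c₂ > 0 (independent of n, m, k) such that for all integers n ≥ 1, k ≥ 2 and m ≥ 0: (i) if m ≤ c₁·( n/√k + √n ) then ε*(𝒫, n, m) ≤ 0.1; and (ii) if m ≥ C₁·( n/√k + √n ) then ε*(𝒫, n, m) ≥ c₂. That is, an (n, n+m) sample amplification with error 0.1 is possible if and only if m = O(n/√k + √n). -/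

import Mathlib

open MeasureTheory ProbabilityTheory
open scoped ENNReal NNReal BigOperators

/-- Total variation distance between two measures: `sup_A |P(A) - Q(A)|`. -/
noncomputable def tvDist {X : Type*} [MeasurableSpace X] (μ ν : Measure X) : ℝ :=
  ⨆ A : {s : Set X // MeasurableSet s}, |(μ A).toReal - (ν A).toReal|

/-- Minimax sample amplification error `ε*(𝒫, n, m)` for the family `(P θ)_θ`. -/
noncomputable def ampErr {X Θ : Type*} [MeasurableSpace X] (P : Θ → Measure X)
    (n m : ℕ) : ℝ :=
  ⨅ T : {T : Kernel (Fin n → X) (Fin (n + m) → X) // IsMarkovKernel T},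
    ⨆ θ : Θ, tvDist (Measure.pi fun _ : Fin (n + m) => P θ)
      ((Measure.pi fun _ : Fin n => P θ).bind T.1)

/-- The Poissonized discrete distribution model: probability vectors `q` on `[k]`
index the product Poisson measures `∏_{j=1}^k Poi(q_j)` on `ℕ^k`. -/
noncomputable def poissonizedModel (k : ℕ)
    (q : {q : Fin k → ℝ≥0 // (∑ j, q j) = 1}) : Measure (Fin k → ℕ) :=
  Measure.pi fun j => poissonMeasure (q.1 j)

section TotalVariation

variable {X Y : Type*} [MeasurableSpace X] [MeasurableSpace Y]

lemma abs_sub_le_one_of_isProbabilityMeasure (μ ν : Measure X) [IsProbabilityMeasure μ]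
    [IsProbabilityMeasure ν] (A : Set X) : |(μ A).toReal - (ν A).toReal| ≤ 1 := by
  have h1 : (μ A).toReal ≤ 1 := measureReal_le_one (μ := μ) (s := A)
  have h2 : (ν A).toReal ≤ 1 := measureReal_le_one (μ := ν) (s := A)
  have h3 : 0 ≤ (μ A).toReal := ENNReal.toReal_nonneg
  have h4 : 0 ≤ (ν A).toReal := ENNReal.toReal_nonneg
  rw [abs_le]
  constructor <;> linarith

lemma abs_sub_le_tvDist (μ ν : Measure X) [IsProbabilityMeasure μ] [IsProbabilityMeasure ν]
    {A : Set X} (hA : MeasurableSet A) : |(μ A).toReal - (ν A).toReal| ≤ tvDist μ ν :=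
  le_ciSup (f := fun A : {s : Set X // MeasurableSet s} => |(μ A).toReal - (ν A).toReal|)
    ⟨1, by rintro _ ⟨A, rfl⟩; exact abs_sub_le_one_of_isProbabilityMeasure μ ν A⟩ ⟨A, hA⟩

lemma tvDist_le {μ ν : Measure X} {c : ℝ}
    (h : ∀ A, MeasurableSet A → |(μ A).toReal - (ν A).toReal| ≤ c) : tvDist μ ν ≤ c := by
  have : Nonempty {s : Set X // MeasurableSet s} := ⟨⟨∅, MeasurableSet.empty⟩⟩
  exact ciSup_le fun A => h A.1 A.2

lemma tvDist_nonneg (μ ν : Measure X) : 0 ≤ tvDist μ ν :=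
  Real.iSup_nonneg fun _ => abs_nonneg _

lemma tvDist_le_one (μ ν : Measure X) [IsProbabilityMeasure μ] [IsProbabilityMeasure ν] :
    tvDist μ ν ≤ 1 :=
  tvDist_le fun A _ => abs_sub_le_one_of_isProbabilityMeasure μ ν A

lemma tvDist_comm (μ ν : Measure X) : tvDist μ ν = tvDist ν μ := by
  simp only [tvDist, abs_sub_comm]

lemma tvDist_map_le (μ ν : Measure X) [IsProbabilityMeasure μ] [IsProbabilityMeasure ν]
    {f : X → Y} (hf : Measurable f) : tvDist (μ.map f) (ν.map f) ≤ tvDist μ ν :=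
  tvDist_le fun A hA => by
    rw [Measure.map_apply hf hA, Measure.map_apply hf hA]
    exact abs_sub_le_tvDist μ ν (hf hA)

lemma integrable_of_mem_Icc {μ : Measure X} [IsFiniteMeasure μ] {f : X → ℝ} {a b : ℝ}
    (hf : Measurable f) (h : ∀ x, f x ∈ Set.Icc a b) : Integrable f μ :=
  Integrable.of_mem_Icc a b hf.aemeasurable (Filter.Eventually.of_forall h)

/-- The total variation distance controls differences of integrals of `[0, 1]`-valued functions. -/
lemma integral_sub_integral_le_tvDist (μ ν : Measure X) [IsProbabilityMeasure μ]
    [IsProbabilityMeasure ν] {f : X → ℝ} (hf : Measurable f) (h : ∀ x, f x ∈ Set.Icc (0 : ℝ) 1) :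
    ∫ x, f x ∂μ - ∫ x, f x ∂ν ≤ tvDist μ ν := by
  obtain ⟨s, hs, h1, h2⟩ := hahn_decomposition μ ν
  have hfi : ∀ ρ : Measure X, [IsProbabilityMeasure ρ] → Integrable f ρ := fun ρ _ =>
    integrable_of_mem_Icc hf h
  have hr1 : ν.restrict s ≤ μ.restrict s := by
    rw [Measure.le_iff]
    intro t ht
    rw [Measure.restrict_apply ht, Measure.restrict_apply ht]
    exact h1 _ (ht.inter hs) Set.inter_subset_right
  have hr2 : μ.restrict sᶜ ≤ ν.restrict sᶜ := by
    rw [Measure.le_iff]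
    intro t ht
    rw [Measure.restrict_apply ht, Measure.restrict_apply ht]
    exact h2 _ (ht.inter hs.compl) Set.inter_subset_right
  have k1 : ∫ x in s, (1 - f x) ∂ν ≤ ∫ x in s, (1 - f x) ∂μ :=
    integral_mono_measure hr1 (Filter.Eventually.of_forall fun x => sub_nonneg.2 (h x).2)
      ((integrable_const _).sub (hfi μ)).integrableOn
  have k2 : ∫ x in sᶜ, f x ∂μ ≤ ∫ x in sᶜ, f x ∂ν :=
    integral_mono_measure hr2 (Filter.Eventually.of_forall fun x => (h x).1) (hfi ν).integrableOn
  rw [integral_sub (integrable_const _) (hfi ν).integrableOn,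
    integral_sub (integrable_const _) (hfi μ).integrableOn] at k1
  simp only [integral_const, smul_eq_mul, mul_one, measureReal_restrict_apply_univ] at k1
  have k3 := (abs_le.1 (abs_sub_le_tvDist μ ν hs)).2
  rw [← integral_add_compl hs (hfi μ), ← integral_add_compl hs (hfi ν)]
  simp only [measureReal_def] at k1
  linarith

lemma toReal_bind_apply (μ : Measure X) (κ : Kernel X Y) [IsMarkovKernel κ]
    {A : Set Y} (hA : MeasurableSet A) :
    ((μ.bind κ) A).toReal = ∫ x, (κ x A).toReal ∂μ := by
  rw [Measure.bind_apply hA κ.aemeasurable, integral_toReal]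
  · exact (κ.measurable_coe hA).aemeasurable
  · exact Filter.Eventually.of_forall fun x => measure_lt_top _ _

lemma tvDist_bind_le (μ ν : Measure X) [IsProbabilityMeasure μ] [IsProbabilityMeasure ν]
    (κ : Kernel X Y) [IsMarkovKernel κ] : tvDist (μ.bind κ) (ν.bind κ) ≤ tvDist μ ν := by
  refine tvDist_le fun A hA => ?_
  have hm : Measurable fun x => (κ x A).toReal := (κ.measurable_coe hA).ennreal_toReal
  have hI : ∀ x, (κ x A).toReal ∈ Set.Icc (0 : ℝ) 1 := fun x =>
    ⟨ENNReal.toReal_nonneg, measureReal_le_one (μ := κ x) (s := A)⟩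
  rw [toReal_bind_apply μ κ hA, toReal_bind_apply ν κ hA, abs_le]
  have h1 := integral_sub_integral_le_tvDist μ ν hm hI
  have h2 := integral_sub_integral_le_tvDist ν μ hm hI
  rw [tvDist_comm] at h2
  constructor <;> linarith

/-- Integrals against a measure with a real nonnegative density. -/
lemma integral_withDensity_ofReal {μ : Measure X} {p : X → ℝ} (hp : Measurable p)
    (h0 : ∀ x, 0 ≤ p x) (f : X → ℝ) :
    ∫ x, f x ∂(μ.withDensity fun x => ENNReal.ofReal (p x)) = ∫ x, p x * f x ∂μ := by
  rw [integral_withDensity_eq_integral_toReal_smul hp.ennreal_ofReal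
    (Filter.Eventually.of_forall fun x => ENNReal.ofReal_lt_top)]
  exact integral_congr_ae (Filter.Eventually.of_forall fun x => by
    simp [ENNReal.toReal_ofReal (h0 x)])

lemma integrable_of_isFiniteMeasure_withDensity {μ : Measure X} {p : X → ℝ} (hp : Measurable p)
    (h0 : ∀ x, 0 ≤ p x) [IsFiniteMeasure (μ.withDensity fun x => ENNReal.ofReal (p x))] :
    Integrable p μ := by
  refine ⟨hp.aestronglyMeasurable, ?_⟩
  rw [hasFiniteIntegral_iff_ofReal (Filter.Eventually.of_forall h0)]
  have := measure_lt_top (μ.withDensity fun x => ENNReal.ofReal (p x)) Set.univ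
  rwa [withDensity_apply _ MeasurableSet.univ, Measure.restrict_univ] at this

/-- If the density of `ν` is a function of a statistic `φ`, then `ν` is recovered from the law
of `φ` by the conditional distribution under the base measure. -/
lemma withDensity_comp_eq_bind_condDistrib [StandardBorelSpace X] [Nonempty X]
    (μ : Measure X) [IsFiniteMeasure μ] {φ : X → Y} (hφ : Measurable φ)
    {g : Y → ℝ≥0∞} (hg : Measurable g) :
    μ.withDensity (fun x => g (φ x)) =
      ((μ.withDensity (fun x => g (φ x))).map φ).bind (condDistrib id φ μ) := by
  have hmap : (μ.withDensity (fun x => g (φ x))).map φ = (μ.map φ).withDensity g := by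
    ext s hs
    rw [Measure.map_apply hφ hs, withDensity_apply _ (hφ hs), withDensity_apply _ hs,
      setLIntegral_map hs hg hφ]
  ext A hA
  rw [hmap, Measure.bind_apply hA (condDistrib id φ μ).aemeasurable,
    lintegral_withDensity_eq_lintegral_mul _ hg ((condDistrib id φ μ).measurable_coe hA),
    withDensity_apply _ hA]
  have key := compProd_map_condDistrib (X := φ) (mβ := inferInstance) (aemeasurable_id (μ := μ))
  have hF : Measurable fun z : Y × X => g z.1 * A.indicator 1 z.2 :=
    (hg.comp measurable_fst).mul ((measurable_one.indicator hA).comp measurable_snd)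
  have h1 : ∫⁻ z, g z.1 * A.indicator 1 z.2 ∂(μ.map fun a => (φ a, id a)) =
      ∫⁻ x in A, g (φ x) ∂μ := by
    rw [lintegral_map hF (hφ.prodMk measurable_id), ← lintegral_indicator hA]
    refine lintegral_congr fun x => ?_
    by_cases hx : x ∈ A <;> simp [hx]
  rw [← h1, ← key, Measure.lintegral_compProd hF]
  refine lintegral_congr fun y => ?_
  dsimp only
  rw [lintegral_const_mul _ (measurable_one.indicator hA), lintegral_indicator_one hA]
  rfl

end TotalVariation

section Poisson

lemma poissonMeasure_mul_eq_withDensity (r t : ℝ≥0) :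
    poissonMeasure (r * t) = (poissonMeasure r).withDensity
      fun n => ENNReal.ofReal (Real.exp (r - r * t) * (t : ℝ) ^ n) := by
  refine Measure.ext_of_singleton fun n => ?_
  rw [withDensity_apply _ (measurableSet_singleton n), lintegral_singleton,
    poissonMeasure_singleton, poissonMeasure_singleton, ← ENNReal.ofReal_mul (by positivity)]
  congr 1
  have : Real.exp (-((r * t : ℝ≥0) : ℝ)) = Real.exp (r - r * t) * Real.exp (-r) := by
    rw [← Real.exp_add]; congr 1; push_cast; ring
  rw [this]
  push_cast
  ring

lemma pi_withDensity_ofReal {ι : Type*} [Fintype ι] {α : ι → Type*} [∀ i, Countable (α i)]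
    [∀ i, MeasurableSpace (α i)] [∀ i, MeasurableSingletonClass (α i)]
    (μ : ∀ i, Measure (α i)) [∀ i, SigmaFinite (μ i)] (p : ∀ i, α i → ℝ)
    (h0 : ∀ i x, 0 ≤ p i x)
    [∀ i, SigmaFinite ((μ i).withDensity fun x => ENNReal.ofReal (p i x))] :
    Measure.pi (fun i => (μ i).withDensity fun x => ENNReal.ofReal (p i x)) =
      (Measure.pi μ).withDensity fun x => ENNReal.ofReal (∏ i, p i (x i)) := by
  refine Measure.ext_of_singleton fun x => ?_
  rw [withDensity_apply _ (measurableSet_singleton x), lintegral_singleton, Measure.pi_singleton,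
    Measure.pi_singleton, ENNReal.ofReal_prod_of_nonneg (fun i _ => h0 i _),
    ← Finset.prod_mul_distrib]
  refine Finset.prod_congr rfl fun i _ => ?_
  rw [withDensity_apply _ (measurableSet_singleton _), lintegral_singleton]

lemma HasSum.congr_of_eq {f g : ℕ → ℝ} {s : ℝ} (h : HasSum f s) (hfg : ∀ n, g n = f n) :
    HasSum g s := by
  rwa [funext hfg]

variable {ι : Type*} [Fintype ι]

/-- The product of Poisson measures with rates `a`. -/
noncomputable def poissonVec (a : ι → ℝ≥0) : Measure (ι → ℕ) :=
  Measure.pi fun j => poissonMeasure (a j)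

instance (a : ι → ℝ≥0) : IsProbabilityMeasure (poissonVec a) := by
  unfold poissonVec; infer_instance

lemma poissonVec_conv (a b : ι → ℝ≥0) :
    ((poissonVec a).prod (poissonVec b)).map (fun z => z.1 + z.2) = poissonVec (a + b) := by
  have h := (measurePreserving_arrowProdEquivProdArrow ℕ ℕ ι (fun i => poissonMeasure (a i))
    (fun i => poissonMeasure (b i))).map_eq
  unfold poissonVec
  rw [← h, Measure.map_map (by fun_prop) (MeasurableEquiv.measurable _)]
  have h2 := Measure.pi_map_pi (μ := fun i => (poissonMeasure (a i)).prod (poissonMeasure (b i)))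
    (f := fun _ z => z.1 + z.2) (fun i => by fun_prop)
  have h3 : ∀ i, ((poissonMeasure (a i)).prod (poissonMeasure (b i))).map (fun z => z.1 + z.2) =
      poissonMeasure (a i + b i) := fun i => poissonMeasure_conv_poissonMeasure (a i) (b i)
  simp only [h3] at h2
  exact h2

lemma poissonVec_zero : poissonVec (0 : ι → ℝ≥0) = Measure.dirac 0 := by
  classical
  refine Measure.ext_of_singleton fun x => ?_
  rw [poissonVec, Measure.pi_singleton, Measure.dirac_apply' _ (measurableSet_singleton x)]
  simp only [poissonMeasure_singleton, Pi.zero_apply, NNReal.coe_zero, neg_zero, Real.exp_zero,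
    one_mul, Set.indicator, Set.mem_singleton_iff, Pi.one_apply]
  split_ifs with h
  · subst h; simp
  · obtain ⟨i, hi⟩ : ∃ i, x i ≠ 0 := by
      by_contra! hc
      exact h (funext fun i => (hc i).symm)
    exact Finset.prod_eq_zero (Finset.mem_univ i) (by simp [hi])

lemma map_sum_pi_poissonVec (L : ℕ) (a : ι → ℝ≥0) :
    (Measure.pi fun _ : Fin L => poissonVec a).map (fun x => ∑ i, x i) = poissonVec (L • a) := by
  induction L with
  | zero =>
    simp only [Finset.univ_eq_empty, Finset.sum_empty, zero_smul, poissonVec_zero]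
    rw [Measure.map_const]
    simp
  | succ L ih =>
    have h := (measurePreserving_piFinSuccAbove (fun _ : Fin (L + 1) => poissonVec a) 0)
    have h1 : (fun x : Fin (L + 1) → ι → ℕ => ∑ i, x i) =
        (fun z : (ι → ℕ) × (Fin L → ι → ℕ) => z.1 + ∑ i, z.2 i) ∘
          (MeasurableEquiv.piFinSuccAbove (fun _ => ι → ℕ) 0) := by
      funext x
      simp [Fin.sum_univ_succ, MeasurableEquiv.piFinSuccAbove, Fin.tail]
    have h2 : (fun z : (ι → ℕ) × (Fin L → ι → ℕ) => z.1 + ∑ i, z.2 i) =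
        (fun z : (ι → ℕ) × (ι → ℕ) => z.1 + z.2) ∘ (Prod.map id (fun x => ∑ i, x i)) := rfl
    have hs : Measurable fun x : Fin L → ι → ℕ => ∑ i, x i := by fun_prop
    rw [h1, ← Measure.map_map (by fun_prop) (MeasurableEquiv.measurable _), h.map_eq, h2,
      ← Measure.map_map (by fun_prop) (by fun_prop),
      ← Measure.map_prod_map _ _ measurable_id hs, ih, Measure.map_id, poissonVec_conv,
      succ_nsmul, add_comm]

lemma poissonVec_mul_eq_withDensity (r t : ι → ℝ≥0) :
    poissonVec (fun j => r j * t j) = (poissonVec r).withDensity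
      fun x => ENNReal.ofReal (∏ j, (Real.exp (r j - r j * t j) * (t j : ℝ) ^ x j)) := by
  have : ∀ j, SigmaFinite ((poissonMeasure (r j)).withDensity
      fun n => ENNReal.ofReal (Real.exp (r j - r j * t j) * (t j : ℝ) ^ n)) := fun j => by
    rw [← poissonMeasure_mul_eq_withDensity]; infer_instance
  rw [poissonVec, poissonVec, ← pi_withDensity_ofReal _
    (fun j n => Real.exp (r j - r j * t j) * (t j : ℝ) ^ n) fun j n => by positivity]
  simp only [poissonMeasure_mul_eq_withDensity]

lemma poissonVec_eq_withDensity (a : ι → ℝ≥0) :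
    poissonVec a = (poissonVec (1 : ι → ℝ≥0)).withDensity
      fun x => ENNReal.ofReal (∏ j, (Real.exp (1 - a j) * (a j : ℝ) ^ x j)) := by
  simpa using poissonVec_mul_eq_withDensity 1 a

/-- Sufficiency of the sum: a sample of size `L` is regenerated from its sum by a kernel which does
not depend on the parameter. -/
lemma exists_kernel_pi_poissonVec_eq_bind (ι : Type*) [Fintype ι] (L : ℕ) :
    ∃ κ : Kernel (ι → ℕ) (Fin L → ι → ℕ), IsMarkovKernel κ ∧
      ∀ a : ι → ℝ≥0, (Measure.pi fun _ : Fin L => poissonVec a) = (poissonVec (L • a)).bind κ := by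
  have hs : Measurable fun x : Fin L → ι → ℕ => ∑ i, x i := by fun_prop
  refine ⟨condDistrib id (fun x : Fin L → ι → ℕ => ∑ i, x i)
    (Measure.pi fun _ : Fin L => poissonVec (1 : ι → ℝ≥0)), inferInstance, fun a => ?_⟩
  let g : (ι → ℕ) → ℝ≥0∞ := fun s =>
    ENNReal.ofReal (∏ j, (Real.exp (1 - a j) ^ L * (a j : ℝ) ^ s j))
  have hd : (Measure.pi fun _ : Fin L => poissonVec a) =
      (Measure.pi fun _ : Fin L => poissonVec (1 : ι → ℝ≥0)).withDensity
        (fun x => g (∑ i, x i)) := by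
    have : SigmaFinite ((poissonVec (1 : ι → ℝ≥0)).withDensity
      fun x => ENNReal.ofReal (∏ j, (Real.exp (1 - a j) * (a j : ℝ) ^ x j))) := by
      rw [← poissonVec_eq_withDensity]; infer_instance
    simp only [poissonVec_eq_withDensity a]
    rw [pi_withDensity_ofReal (fun _ : Fin L => poissonVec (1 : ι → ℝ≥0))
      (fun _ x => ∏ j, (Real.exp (1 - a j) * (a j : ℝ) ^ x j)) (fun _ _ => by positivity)]
    congr 1
    funext x
    simp only [g]
    congr 1
    rw [Finset.prod_comm]
    refine Finset.prod_congr rfl fun j _ => ?_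
    rw [Finset.prod_mul_distrib, Finset.prod_const, Finset.card_univ, Fintype.card_fin,
      Finset.sum_apply, Finset.prod_pow_eq_pow_sum]
  have key := withDensity_comp_eq_bind_condDistrib
    (Measure.pi fun _ : Fin L => poissonVec (1 : ι → ℝ≥0)) hs (g := g) (Measurable.of_discrete)
  rw [← hd] at key
  rw [map_sum_pi_poissonVec] at key
  exact key

lemma hasSum_pow_poissonMeasure (r : ℝ≥0) (x : ℝ) :
    HasSum (fun n : ℕ => Real.exp (-r) * (r : ℝ) ^ n / n.factorial * x ^ n)
      (Real.exp (r * (x - 1))) := by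
  have h := (NormedSpace.expSeries_div_hasSum_exp (𝔸 := ℝ) ((r : ℝ) * x)).mul_left (Real.exp (-r))
  rw [← Real.exp_eq_exp_ℝ, ← Real.exp_add] at h
  have h1 : (r : ℝ) * (x - 1) = -r + r * x := by ring
  rw [h1]
  refine h.congr_of_eq fun n => ?_
  rw [mul_pow]
  ring

lemma integrable_pow_poissonMeasure (r : ℝ≥0) (x : ℝ) :
    Integrable (fun n : ℕ => x ^ n) (poissonMeasure r) := by
  rw [integrable_poissonMeasure_iff]
  simpa using (hasSum_pow_poissonMeasure r |x|).summable

lemma integral_pow_poissonMeasure (r : ℝ≥0) (x : ℝ) :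
    ∫ n : ℕ, x ^ n ∂(poissonMeasure r) = Real.exp (r * (x - 1)) := by
  rw [integral_poissonMeasure]
  exact (hasSum_pow_poissonMeasure r x).tsum_eq

lemma hasSum_poissonMeasure_shift (r : ℝ≥0) (f : ℕ → ℝ) {s : ℝ}
    (h : HasSum (fun n : ℕ => Real.exp (-r) * (r : ℝ) ^ n / n.factorial * f n) s) :
    HasSum (fun n : ℕ => Real.exp (-r) * (r : ℝ) ^ n / n.factorial * (n * f (n - 1))) (r * s) := by
  rw [← hasSum_nat_add_iff' 1]
  simp only [Finset.range_one, Finset.sum_singleton, Nat.cast_zero, zero_mul, mul_zero, sub_zero]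
  refine (h.mul_left (r : ℝ)).congr_of_eq fun n => ?_
  rw [Nat.factorial_succ, Nat.add_sub_cancel]
  have h1 : (n.factorial : ℝ) ≠ 0 := by positivity
  have h2 : (n : ℝ) + 1 ≠ 0 := by positivity
  push_cast
  field_simp
  ring

lemma hasSum_sq_sub_poissonMeasure (r : ℝ≥0) :
    HasSum (fun n : ℕ => Real.exp (-r) * (r : ℝ) ^ n / n.factorial * ((n : ℝ) - r) ^ 2) r := by
  have h0 := hasSum_one_poissonMeasure r
  have h1 := hasSum_poissonMeasure_shift r (fun _ => 1) (s := 1) (by simpa using h0)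
  have h2 := hasSum_poissonMeasure_shift r (fun n => (n : ℝ) + 1) (s := r * 1 + 1) (by
    rw [mul_one] at h1 ⊢
    refine (h1.add h0).congr_of_eq fun n => ?_
    ring)
  have h3 := (h2.add (h1.mul_left (-2 * (r : ℝ)))).add (h0.mul_left ((r : ℝ) ^ 2))
  have h4 : (r : ℝ) * (r * 1 + 1) + -2 * r * (r * 1) + r ^ 2 * 1 = r := by ring
  rw [h4] at h3
  refine h3.congr_of_eq fun n => ?_
  cases n with
  | zero => push_cast; ring
  | succ n => simp only [Nat.add_sub_cancel]; push_cast; ring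

lemma integral_sq_sub_poissonMeasure (r : ℝ≥0) :
    ∫ n : ℕ, ((n : ℝ) - r) ^ 2 ∂(poissonMeasure r) = r := by
  rw [integral_poissonMeasure]
  exact (hasSum_sq_sub_poissonMeasure r).tsum_eq

lemma integrable_sq_sub_poissonMeasure (r : ℝ≥0) :
    Integrable (fun n : ℕ => ((n : ℝ) - r) ^ 2) (poissonMeasure r) := by
  rw [integrable_poissonMeasure_iff]
  simpa using (hasSum_sq_sub_poissonMeasure r).summable

end Poisson

section Hellinger

lemma abs_sub_le_hellinger {p q β : ℝ} (hp : 0 ≤ p) (hq : 0 ≤ q) (hβ : 0 < β) :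
    |p - q| ≤ (p + q - 2 * √(p * q)) / (2 * β) + β * (p + q) := by
  rw [Real.sqrt_mul hp]
  have h1 : p - q = (√p - √q) * (√p + √q) := by
    nlinarith [Real.mul_self_sqrt hp, Real.mul_self_sqrt hq]
  have h2 : p + q - 2 * (√p * √q) = |√p - √q| ^ 2 := by
    rw [sq_abs]; nlinarith [Real.mul_self_sqrt hp, Real.mul_self_sqrt hq]
  have h3 : (√p + √q) ^ 2 ≤ 2 * (p + q) := by
    nlinarith [Real.mul_self_sqrt hp, Real.mul_self_sqrt hq, sq_nonneg (√p - √q)]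
  have h5 : |√p - √q| * (√p + √q) * (2 * β) ≤
      |√p - √q| ^ 2 + β ^ 2 * (√p + √q) ^ 2 := by
    nlinarith [sq_nonneg (|√p - √q| - β * (√p + √q))]
  rw [h1, h2, abs_mul, abs_of_nonneg (by positivity : 0 ≤ √p + √q),
    div_add' _ _ _ (by positivity), le_div_iff₀ (by positivity)]
  nlinarith

/-- The total variation distance is controlled by the Bhattacharyya coefficient. -/
lemma tvDist_withDensity_le {X : Type*} [MeasurableSpace X] {μ : Measure X} {p q : X → ℝ}
    (hp : Measurable p) (hq : Measurable q) (hp0 : ∀ x, 0 ≤ p x) (hq0 : ∀ x, 0 ≤ q x)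
    [IsProbabilityMeasure (μ.withDensity fun x => ENNReal.ofReal (p x))]
    [IsProbabilityMeasure (μ.withDensity fun x => ENNReal.ofReal (q x))] {β : ℝ} (hβ : 0 < β) :
    tvDist (μ.withDensity fun x => ENNReal.ofReal (p x))
      (μ.withDensity fun x => ENNReal.ofReal (q x)) ≤
      (2 - 2 * ∫ x, √(p x * q x) ∂μ) / (2 * β) + 2 * β := by
  have hpi := integrable_of_isFiniteMeasure_withDensity (μ := μ) hp hp0
  have hqi := integrable_of_isFiniteMeasure_withDensity (μ := μ) hq hq0
  have hpq : Integrable (fun x => p x + q x) μ := hpi.add hqi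
  have hsi : Integrable (fun x => √(p x * q x)) μ := by
    refine hpq.mono' (by fun_prop) (Filter.Eventually.of_forall fun x => ?_)
    rw [Real.norm_of_nonneg (Real.sqrt_nonneg _)]
    refine Real.sqrt_le_iff.2 ⟨add_nonneg (hp0 x) (hq0 x), ?_⟩
    nlinarith [hp0 x, hq0 x, mul_nonneg (hp0 x) (hq0 x)]
  have hd : Integrable (fun x => (p x + q x - 2 * √(p x * q x)) / (2 * β)) μ :=
    (hpq.sub (hsi.const_mul 2)).div_const _
  have hone : ∀ f : X → ℝ, Measurable f → (∀ x, 0 ≤ f x) →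
      IsProbabilityMeasure (μ.withDensity fun x => ENNReal.ofReal (f x)) → ∫ x, f x ∂μ = 1 := by
    intro f hf hf0 h
    have := integral_withDensity_ofReal (μ := μ) hf hf0 (fun _ => 1)
    simpa using this.symm
  have hP := hone p hp hp0 inferInstance
  have hQ := hone q hq hq0 inferInstance
  have hset : ∀ f : X → ℝ, Measurable f → (∀ x, 0 ≤ f x) → Integrable f μ →
      ∀ A, MeasurableSet A →
      ((μ.withDensity fun x => ENNReal.ofReal (f x)) A).toReal = ∫ x in A, f x ∂μ := by
    intro f hf hf0 hfi A hA
    rw [withDensity_apply _ hA, integral_eq_lintegral_of_nonneg_ae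
      (Filter.Eventually.of_forall hf0) hf.aestronglyMeasurable]
  refine tvDist_le fun A hA => ?_
  rw [hset p hp hp0 hpi A hA, hset q hq hq0 hqi A hA,
    ← integral_sub hpi.integrableOn hqi.integrableOn]
  calc |∫ x in A, (p x - q x) ∂μ| ≤ ∫ x in A, |p x - q x| ∂μ := abs_integral_le_integral_abs
    _ ≤ ∫ x, |p x - q x| ∂μ :=
      setIntegral_le_integral (hpi.sub hqi).abs (Filter.Eventually.of_forall fun x => abs_nonneg _)
    _ ≤ ∫ x, ((p x + q x - 2 * √(p x * q x)) / (2 * β) + β * (p x + q x)) ∂μ := by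
      refine integral_mono (hpi.sub hqi).abs ?_ fun x => abs_sub_le_hellinger (hp0 x) (hq0 x) hβ
      exact hd.add (hpq.const_mul _)
    _ = (2 - 2 * ∫ x, √(p x * q x) ∂μ) / (2 * β) + 2 * β := by
      rw [integral_add hd (hpq.const_mul _), integral_div,
        integral_const_mul, integral_sub hpq (hsi.const_mul 2), integral_const_mul,
        integral_add hpi hqi, hP, hQ]
      ring

variable {ι : Type*} [Fintype ι]

lemma tvDist_poissonVec_le (a b : ι → ℝ≥0) {β : ℝ} (hβ : 0 < β) :
    tvDist (poissonVec a) (poissonVec b) ≤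
      (∑ j, (√(a j : ℝ) - √(b j : ℝ)) ^ 2) / (2 * β) + 2 * β := by
  let p : (ι → ℝ≥0) → (ι → ℕ) → ℝ := fun a x => ∏ j, (Real.exp (1 - a j) * (a j : ℝ) ^ x j)
  have hp0 : ∀ a x, 0 ≤ p a x := fun a x => Finset.prod_nonneg fun _ _ => by positivity
  have hpr : ∀ a : ι → ℝ≥0, IsProbabilityMeasure
      ((poissonVec (1 : ι → ℝ≥0)).withDensity fun x => ENNReal.ofReal (p a x)) := fun a => by
    rw [← poissonVec_eq_withDensity]; infer_instance
  have h := tvDist_withDensity_le (μ := poissonVec (1 : ι → ℝ≥0)) (p := p a) (q := p b)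
    Measurable.of_discrete Measurable.of_discrete (hp0 a) (hp0 b) hβ
  rw [← poissonVec_eq_withDensity, ← poissonVec_eq_withDensity] at h
  refine h.trans ?_
  have hbc : ∫ x, √(p a x * p b x) ∂(poissonVec (1 : ι → ℝ≥0)) =
      Real.exp (-(∑ j, (√(a j : ℝ) - √(b j : ℝ)) ^ 2) / 2) := by
    have h1 : ∀ x, √(p a x * p b x) =
        ∏ j, (Real.exp (1 - (a j + b j) / 2) * (√(a j : ℝ) * √(b j : ℝ)) ^ x j) := by
      intro x
      rw [Real.sqrt_eq_iff_mul_self_eq (mul_nonneg (hp0 _ _) (hp0 _ _))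
        (Finset.prod_nonneg fun _ _ => by positivity)]
      simp only [p]
      rw [← Finset.prod_mul_distrib, ← Finset.prod_mul_distrib]
      refine Finset.prod_congr rfl fun j _ => ?_
      have e1 : Real.exp (1 - (a j + b j) / 2) * Real.exp (1 - (a j + b j) / 2) =
          Real.exp (1 - a j) * Real.exp (1 - b j) := by
        rw [← Real.exp_add, ← Real.exp_add]; congr 1; ring
      have e2 : (√(a j : ℝ) * √(b j : ℝ)) ^ x j * (√(a j : ℝ) * √(b j : ℝ)) ^ x j =
          (a j : ℝ) ^ x j * (b j : ℝ) ^ x j := by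
        rw [← mul_pow, ← mul_pow]
        congr 1
        calc √(a j : ℝ) * √(b j : ℝ) * (√(a j : ℝ) * √(b j : ℝ)) =
            (√(a j : ℝ) * √(a j : ℝ)) * (√(b j : ℝ) * √(b j : ℝ)) := by ring
          _ = _ := by rw [Real.mul_self_sqrt (by positivity), Real.mul_self_sqrt (by positivity)]
      linear_combination (-((√(a j : ℝ) * √(b j : ℝ)) ^ x j * (√(a j : ℝ) * √(b j : ℝ)) ^ x j)) * e1
        - Real.exp (1 - a j) * Real.exp (1 - b j) * e2
    simp only [h1, poissonVec, Pi.one_apply]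
    rw [integral_fintype_prod_eq_prod (𝕜 := ℝ)
      (fun j (n : ℕ) => Real.exp (1 - (a j + b j) / 2) * (√(a j : ℝ) * √(b j : ℝ)) ^ n)]
    simp only [integral_const_mul, integral_pow_poissonMeasure]
    rw [← Finset.sum_neg_distrib, Finset.sum_div, Real.exp_sum]
    refine Finset.prod_congr rfl fun j _ => ?_
    rw [← Real.exp_add]
    congr 1
    have e1 := Real.mul_self_sqrt (a j).2
    have e2 := Real.mul_self_sqrt (b j).2
    simp only [NNReal.val_eq_coe] at e1 e2
    simp only [NNReal.coe_one]
    nlinarith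
  rw [hbc]
  have := Real.add_one_le_exp (-(∑ j, (√(a j : ℝ) - √(b j : ℝ)) ^ 2) / 2)
  gcongr
  linarith

lemma sq_sqrt_sub_sqrt_le {a b : ℝ} (ha : 0 ≤ a) (hb : 0 < b) :
    (√a - √b) ^ 2 ≤ (a - b) ^ 2 / b := by
  rw [le_div_iff₀ hb]
  have h1 : a - b = (√a - √b) * (√a + √b) := by
    nlinarith [Real.mul_self_sqrt ha, Real.mul_self_sqrt hb.le]
  have h2 : b ≤ (√a + √b) ^ 2 := by
    nlinarith [Real.mul_self_sqrt ha, Real.mul_self_sqrt hb.le,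
      mul_nonneg (Real.sqrt_nonneg a) (Real.sqrt_nonneg b)]
  rw [h1, mul_pow]
  exact mul_le_mul_of_nonneg_left h2 (sq_nonneg _)

end Hellinger

section SumReduction

variable {k : ℕ}

lemma ampErr_poissonizedModel_le_of_kernel {n m : ℕ} {c : ℝ} (hc : 0 ≤ c)
    (K : Kernel (Fin k → ℕ) (Fin k → ℕ)) [IsMarkovKernel K]
    (h : ∀ q : Fin k → ℝ≥0, (∑ j, q j) = 1 →
      tvDist (poissonVec ((n + m) • q)) ((poissonVec (n • q)).bind K) ≤ c) :
    ampErr (poissonizedModel k) n m ≤ c := by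
  obtain ⟨G, hG, hGe⟩ := exists_kernel_pi_poissonVec_eq_bind (Fin k) (n + m)
  have hs : Measurable fun x : Fin n → Fin k → ℕ => ∑ i, x i := by fun_prop
  let T : Kernel (Fin n → Fin k → ℕ) (Fin (n + m) → Fin k → ℕ) :=
    G ∘ₖ (K ∘ₖ Kernel.deterministic _ hs)
  have hT : IsMarkovKernel T := inferInstance
  refine (ciInf_le ⟨0, ?_⟩ (⟨T, hT⟩ : {T : Kernel (Fin n → Fin k → ℕ)
    (Fin (n + m) → Fin k → ℕ) // IsMarkovKernel T})).trans ?_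
  · rintro _ ⟨T, rfl⟩
    exact Real.iSup_nonneg fun _ => tvDist_nonneg _ _
  refine Real.iSup_le (fun q => ?_) hc
  have h1 : (Measure.pi fun _ : Fin n => poissonizedModel k q).bind T =
      ((poissonVec (n • q.1)).bind K).bind G := by
    rw [← Measure.comp_assoc, ← Measure.comp_assoc, Measure.deterministic_comp_eq_map hs,
      ← map_sum_pi_poissonVec]
    rfl
  have h2 : (Measure.pi fun _ : Fin (n + m) => poissonizedModel k q) =
      (poissonVec ((n + m) • q.1)).bind G := hGe q.1
  rw [h1, h2]
  exact (tvDist_bind_le _ _ G).trans (h q.1 q.2)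

lemma exists_kernel_poissonVec_tvDist_le {n m : ℕ}
    (T : Kernel (Fin n → Fin k → ℕ) (Fin (n + m) → Fin k → ℕ)) [IsMarkovKernel T] :
    ∃ K : Kernel (Fin k → ℕ) (Fin k → ℕ), IsMarkovKernel K ∧
      ∀ q : {q : Fin k → ℝ≥0 // (∑ j, q j) = 1},
        tvDist (poissonVec ((n + m) • q.1)) ((poissonVec (n • q.1)).bind K) ≤
          tvDist (Measure.pi fun _ : Fin (n + m) => poissonizedModel k q)
            ((Measure.pi fun _ : Fin n => poissonizedModel k q).bind T) := by
  obtain ⟨G, hG, hGe⟩ := exists_kernel_pi_poissonVec_eq_bind (Fin k) n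
  have hs : Measurable fun x : Fin (n + m) → Fin k → ℕ => ∑ i, x i := by fun_prop
  refine ⟨(T ∘ₖ G).map fun x => ∑ i, x i, Kernel.IsMarkovKernel.map _ hs, fun q => ?_⟩
  have h1 : (Measure.pi fun _ : Fin n => poissonizedModel k q) =
      (poissonVec (n • q.1)).bind G := hGe q.1
  have : IsProbabilityMeasure (poissonizedModel k q) := by
    unfold poissonizedModel; infer_instance
  have h2 := tvDist_map_le (Measure.pi fun _ : Fin (n + m) => poissonizedModel k q)
    ((Measure.pi fun _ : Fin n => poissonizedModel k q).bind T) hs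
  rw [← Measure.map_comp _ _ hs, ← Measure.comp_assoc, ← h1, ← map_sum_pi_poissonVec]
  exact h2

end SumReduction

section UpperBound

variable {ι : Type*} [Fintype ι]

lemma exists_sq_sqrt_sub_sqrt_le (r t : ℝ≥0) :
    ∃ C : ℝ, 0 ≤ C ∧ C * r ≤ t ^ 2 ∧
      ∀ x : ℕ, (√((r + t * x : ℝ≥0) : ℝ) - √((r + t * r : ℝ≥0) : ℝ)) ^ 2 ≤
        C * ((x : ℝ) - r) ^ 2 := by
  rcases eq_or_ne r 0 with rfl | hr
  · refine ⟨t, t.2, by simp, fun x => ?_⟩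
    have : (x : ℝ) ≤ (x : ℝ) ^ 2 := by exact_mod_cast Nat.le_self_pow two_ne_zero x
    simp only [zero_add, mul_zero, NNReal.coe_zero, Real.sqrt_zero, sub_zero]
    rw [Real.sq_sqrt (by positivity)]
    push_cast
    exact mul_le_mul_of_nonneg_left this t.2
  · have hr0 : (0 : ℝ) < r := by positivity
    refine ⟨t ^ 2 / r, by positivity, by field_simp; exact le_rfl, fun x => ?_⟩
    refine (sq_sqrt_sub_sqrt_le (by positivity) (by positivity)).trans ?_
    push_cast
    rw [show (r : ℝ) + t * x - (r + t * r) = t * (x - r) by ring, mul_pow, div_mul_eq_mul_div]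
    gcongr
    nlinarith [mul_nonneg t.2 r.2, NNReal.val_eq_coe t, NNReal.val_eq_coe r]

/-- The estimate-and-resample kernel: split the sample into two halves, estimate the rates from the
first one and add fresh Poisson samples with the estimated rates. -/
lemma exists_kernel_tvDist_poissonVec_le (t : ℝ≥0) {β : ℝ} (hβ : 0 < β) :
    ∃ K : Kernel (ι → ℕ) (ι → ℕ), IsMarkovKernel K ∧ ∀ a : ι → ℝ≥0,
      tvDist (poissonVec ((2 + t) • a)) ((poissonVec (2 • a)).bind K) ≤
        Fintype.card ι * (t : ℝ) ^ 2 / (2 * β) + 2 * β := by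
  obtain ⟨G, hG, hGe⟩ := exists_kernel_pi_poissonVec_eq_bind ι 2
  let J : Kernel (Fin 2 → ι → ℕ) (ι → ℕ) := Kernel.ofFunOfCountable fun x =>
    (poissonVec fun j => t * (x 0 j : ℝ≥0)).map fun z => x 0 + (x 1 + z)
  have hJ : IsMarkovKernel J := ⟨fun x => by
    simp only [J, Kernel.ofFunOfCountable]
    exact Measure.isProbabilityMeasure_map Measurable.of_discrete.aemeasurable⟩
  refine ⟨J ∘ₖ G, inferInstance, fun a => tvDist_le fun A hA => ?_⟩
  have e1 : ((poissonVec (2 • a)).bind (J ∘ₖ G)) A =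
      ∫⁻ x, poissonVec (a + fun j => t * (x j : ℝ≥0)) ((fun z => x + z) ⁻¹' A) ∂(poissonVec a) := by
    rw [← Measure.comp_assoc, ← hGe a, Measure.bind_apply hA J.aemeasurable]
    have hp := measurePreserving_piFinTwo (fun _ : Fin 2 => poissonVec a)
    let F : (ι → ℕ) × (ι → ℕ) → ℝ≥0∞ := fun z =>
      poissonVec (fun j => t * (z.1 j : ℝ≥0)) ((fun w => z.1 + (z.2 + w)) ⁻¹' A)
    have h1 : ∀ x : Fin 2 → ι → ℕ,
        J x A = F (MeasurableEquiv.piFinTwo (fun _ => ι → ℕ) x) := by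
      intro x
      simp only [J, Kernel.ofFunOfCountable]
      exact Measure.map_apply Measurable.of_discrete hA
    simp only [h1]
    rw [hp.lintegral_comp Measurable.of_discrete,
      lintegral_prod _ Measurable.of_discrete.aemeasurable]
    refine lintegral_congr fun x => ?_
    rw [← poissonVec_conv, Measure.map_apply (by fun_prop) (Set.to_countable _).measurableSet,
      Measure.prod_apply (Set.to_countable _).measurableSet]
    rfl
  have e2 : poissonVec ((2 + t) • a) A =
      ∫⁻ x, poissonVec (a + t • a) ((fun z => x + z) ⁻¹' A) ∂(poissonVec a) := by
    have : (2 + t) • a = a + (a + t • a) := by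
      rw [add_smul, two_smul, add_assoc]
    rw [this, ← poissonVec_conv, Measure.map_apply (by fun_prop) hA,
      Measure.prod_apply (Set.to_countable _).measurableSet]
    rfl
  choose C hC0 hCr hC using fun j => exists_sq_sqrt_sub_sqrt_le (a j) t
  have hI : ∀ j, Integrable (fun x : ι → ℕ => C j * ((x j : ℝ) - a j) ^ 2) (poissonVec a) :=
    fun j => (integrable_comp_eval (μ := fun j => poissonMeasure (a j)) (i := j)
      (f := fun n : ℕ => ((n : ℝ) - a j) ^ 2)
      (integrable_sq_sub_poissonMeasure (a j))).const_mul (C j)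
  have hE : ∀ j, ∫ x : ι → ℕ, C j * ((x j : ℝ) - a j) ^ 2 ∂(poissonVec a) = C j * a j := by
    intro j
    rw [integral_const_mul]
    congr 1
    rw [poissonVec, integral_comp_eval (μ := fun j => poissonMeasure (a j)) (i := j)
      (f := fun n : ℕ => ((n : ℝ) - a j) ^ 2) Measurable.of_discrete.aestronglyMeasurable,
      integral_sq_sub_poissonMeasure]
  have hb : ∀ x : ι → ℕ,
      |(poissonVec (a + t • a) ((fun z => x + z) ⁻¹' A)).toReal -
        (poissonVec (a + fun j => t * (x j : ℝ≥0)) ((fun z => x + z) ⁻¹' A)).toReal| ≤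
      (∑ j, C j * ((x j : ℝ) - a j) ^ 2) / (2 * β) + 2 * β := by
    intro x
    refine (abs_sub_le_tvDist _ _ (Set.to_countable _).measurableSet).trans ?_
    rw [tvDist_comm]
    refine (tvDist_poissonVec_le _ _ hβ).trans ?_
    gcongr with j
    exact hC j (x j)
  have hintg : ∀ f : (ι → ℕ) → ι → ℝ≥0, Integrable (fun x : ι → ℕ =>
      (poissonVec (f x) ((fun z => x + z) ⁻¹' A)).toReal) (poissonVec a) := fun f =>
    integrable_of_mem_Icc (a := 0) (b := 1) Measurable.of_discrete
      fun x => ⟨ENNReal.toReal_nonneg, measureReal_le_one⟩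
  rw [e1, e2, ← integral_toReal Measurable.of_discrete.aemeasurable
      (Filter.Eventually.of_forall fun x => measure_lt_top _ _),
    ← integral_toReal Measurable.of_discrete.aemeasurable
      (Filter.Eventually.of_forall fun x => measure_lt_top _ _),
    ← integral_sub (hintg fun _ => a + t • a) (hintg fun x => a + fun j => t * (x j : ℝ≥0))]
  refine abs_integral_le_integral_abs.trans ?_
  have hIs : Integrable (fun x : ι → ℕ => (∑ j, C j * ((x j : ℝ) - a j) ^ 2) / (2 * β))
      (poissonVec a) := (integrable_finsetSum _ fun j _ => hI j).div_const _
  refine (integral_mono ((hintg fun _ => a + t • a).sub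
    (hintg fun x => a + fun j => t * (x j : ℝ≥0))).abs
    (hIs.add (integrable_const (2 * β))) hb).trans ?_
  simp only [Pi.add_apply]
  rw [integral_add hIs (integrable_const _), integral_div,
    integral_finsetSum _ fun j _ => hI j]
  simp only [hE, integral_const, probReal_univ, one_smul]
  gcongr
  calc ∑ j, C j * (a j : ℝ) ≤ ∑ _j : ι, (t : ℝ) ^ 2 := Finset.sum_le_sum fun j _ => hCr j
    _ = _ := by simp

end UpperBound

section UpperBoundRates

lemma ampErr_poissonizedModel_le_of_sqrt {n m k : ℕ} (hn : 1 ≤ n)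
    (h : (m : ℝ) ≤ 1 / 40 * √n) : ampErr (poissonizedModel k) n m ≤ 0.1 := by
  refine ampErr_poissonizedModel_le_of_kernel (by norm_num) Kernel.id fun q hq => ?_
  rw [Measure.id_comp, tvDist_comm]
  refine (tvDist_poissonVec_le _ _ (β := 1 / 40) (by norm_num)).trans ?_
  have hn0 : (0 : ℝ) < n := by exact_mod_cast hn
  have hj : ∀ j, (√((n • q) j : ℝ≥0) - √(((n + m) • q) j : ℝ≥0)) ^ 2 ≤
      1 / 1600 * (q j : ℝ) := by
    intro j
    have e1 : (((n • q) j : ℝ≥0) : ℝ) = n * q j := by simp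
    have e2 : ((((n + m) • q) j : ℝ≥0) : ℝ) = (n + m) * q j := by simp
    rw [e1, e2, Real.sqrt_mul (by positivity), Real.sqrt_mul (by positivity), ← sub_mul, mul_pow,
      Real.sq_sqrt (by positivity), ← neg_sub, neg_sq]
    gcongr
    refine (sq_sqrt_sub_sqrt_le (by positivity) hn0).trans ?_
    rw [add_sub_cancel_left, div_le_iff₀ hn0]
    calc (m : ℝ) ^ 2 ≤ (1 / 40 * √n) ^ 2 := by gcongr
      _ = _ := by rw [mul_pow, Real.sq_sqrt hn0.le]; norm_num
  have hs : ∑ j, (√((n • q) j : ℝ≥0) - √(((n + m) • q) j : ℝ≥0)) ^ 2 ≤ 1 / 1600 := by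
    refine (Finset.sum_le_sum fun j _ => hj j).trans ?_
    rw [← Finset.mul_sum, ← NNReal.coe_sum, hq]
    simp
  calc _ ≤ 1 / 1600 / (2 * (1 / 40)) + 2 * (1 / 40) := add_le_add_left (by gcongr) _
    _ ≤ (0.1 : ℝ) := by norm_num

lemma ampErr_poissonizedModel_le_of_div_sqrt {n m k : ℕ} (hn : 1 ≤ n) (hk : 1 ≤ k)
    (h : (m : ℝ) ≤ 1 / 40 * (n / √k)) : ampErr (poissonizedModel k) n m ≤ 0.1 := by
  have hn0 : (0 : ℝ≥0) < n := by exact_mod_cast hn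
  have hn1 : (0 : ℝ) < n := by exact_mod_cast hn
  have hk0 : (0 : ℝ) < k := by exact_mod_cast hk
  obtain ⟨K, hK, hKb⟩ := exists_kernel_tvDist_poissonVec_le (ι := Fin k) (2 * m / n : ℝ≥0)
    (β := 1 / 40) (by norm_num)
  refine ampErr_poissonizedModel_le_of_kernel (by norm_num) K fun q hq => ?_
  have h1 := hKb ((n / 2 : ℝ≥0) • q)
  have e1 : (2 + (2 * m / n : ℝ≥0)) • (n / 2 : ℝ≥0) • q = (n + m) • q := by
    rw [smul_smul, ← Nat.cast_smul_eq_nsmul ℝ≥0]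
    congr 1
    push_cast
    field_simp
  have e2 : 2 • (n / 2 : ℝ≥0) • q = n • q := by
    rw [← Nat.cast_smul_eq_nsmul ℝ≥0, smul_smul, ← Nat.cast_smul_eq_nsmul ℝ≥0 n]
    congr 1
    push_cast
    field_simp
  rw [e1, e2] at h1
  refine h1.trans ?_
  have h2 : (k : ℝ) * (2 * m / n) ^ 2 ≤ 1 / 400 := by
    have h3 : (2 * m / n : ℝ) ≤ 1 / 20 * (1 / √k) := by
      rw [div_le_iff₀ hn1]
      calc (2 : ℝ) * m ≤ 2 * (1 / 40 * (n / √k)) := by gcongr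
        _ = _ := by ring
    calc (k : ℝ) * (2 * m / n) ^ 2 ≤ k * (1 / 20 * (1 / √k)) ^ 2 := by gcongr
      _ = 1 / 400 := by
        rw [mul_pow, div_pow 1 (√k), Real.sq_sqrt hk0.le]
        field_simp
        norm_num
  simp only [Fintype.card_fin, NNReal.coe_div, NNReal.coe_mul, NNReal.coe_natCast,
    NNReal.coe_ofNat]
  calc _ ≤ 1 / 400 / (2 * (1 / 40)) + 2 * (1 / 40) := add_le_add_left (by gcongr) _
    _ ≤ (0.1 : ℝ) := by norm_num

lemma ampErr_poissonizedModel_le {n m k : ℕ} (hn : 1 ≤ n) (hk : 1 ≤ k)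
    (h : (m : ℝ) ≤ 1 / 80 * (n / √k + √n)) : ampErr (poissonizedModel k) n m ≤ 0.1 := by
  rcases le_total ((n : ℝ) / √k) (√n) with h1 | h1
  · exact ampErr_poissonizedModel_le_of_sqrt hn (by linarith)
  · exact ampErr_poissonizedModel_le_of_div_sqrt hn hk (by linarith)

end UpperBoundRates

section Signs

variable {ι : Type*} [Fintype ι]

/-- The real sign encoded by a Boolean. -/
def boolSign (b : Bool) : ℝ := if b then 1 else -1

/-- The product law on sign vectors with coordinate means `h`. -/
noncomputable def signWeight (h : ι → ℝ) (s : ι → Bool) : ℝ :=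
  ∏ j, (1 + boolSign (s j) * h j) / 2

lemma signWeight_nonneg {h : ι → ℝ} (hh : ∀ j, |h j| ≤ 1) (s : ι → Bool) :
    0 ≤ signWeight h s := by
  refine Finset.prod_nonneg fun j _ => ?_
  have := abs_le.1 (hh j)
  cases s j <;> simp [boolSign] <;> linarith

/-- The log-likelihood surrogate used to compare a sign vector with its estimate `a`. -/
noncomputable def signScore (s : ι → Bool) (a : ι → ℝ) : ℝ :=
  ∑ j, (boolSign (s j) * a j - a j ^ 2 / 2)

lemma signScore_le (s : ι → Bool) (h a : ι → ℝ) :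
    signScore s a ≤ (∑ j, h j ^ 2 / 2) + ∑ j, (boolSign (s j) - h j) * a j := by
  rw [← Finset.sum_add_distrib]
  exact Finset.sum_le_sum fun j _ => by nlinarith [sq_nonneg (h j - a j)]

lemma signScore_self (s : ι → Bool) (h : ι → ℝ) :
    signScore s h = (∑ j, h j ^ 2 / 2) + ∑ j, (boolSign (s j) - h j) * h j := by
  rw [← Finset.sum_add_distrib]
  exact Finset.sum_congr rfl fun j _ => by ring

variable [DecidableEq ι]

lemma sum_prod_bool (f : ι → Bool → ℝ) :
    ∑ s : ι → Bool, ∏ j, f j (s j) = ∏ j, (f j true + f j false) := by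
  have := Finset.prod_univ_sum (fun _ : ι => (Finset.univ : Finset Bool)) f
  rw [Fintype.piFinset_univ] at this
  simpa only [Fintype.sum_bool] using this.symm

lemma sum_signWeight (h : ι → ℝ) : ∑ s, signWeight h s = 1 := by
  unfold signWeight
  rw [sum_prod_bool fun j b => (1 + boolSign b * h j) / 2]
  refine Finset.prod_eq_one fun j _ => ?_
  simp [boolSign]
  ring

lemma sum_signWeight_mul (h : ι → ℝ) (i : ι) :
    ∑ s, signWeight h s * (boolSign (s i) - h i) = 0 := by
  have e : ∀ s : ι → Bool, signWeight h s * (boolSign (s i) - h i) =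
      ∏ l, (1 + boolSign (s l) * h l) / 2 * (if l = i then boolSign (s l) - h l else 1) := by
    intro s
    rw [Finset.prod_mul_distrib, Finset.prod_ite_eq' Finset.univ i, signWeight]
    simp
  simp only [e]
  rw [sum_prod_bool fun l b => (1 + boolSign b * h l) / 2 * (if l = i then boolSign b - h l else 1)]
  refine Finset.prod_eq_zero (Finset.mem_univ i) ?_
  simp [boolSign]
  ring

lemma sum_signWeight_mul_mul (h : ι → ℝ) (i j : ι) :
    ∑ s, signWeight h s * ((boolSign (s i) - h i) * (boolSign (s j) - h j)) =
      if i = j then 1 - h i ^ 2 else 0 := by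
  have e : ∀ s : ι → Bool,
      signWeight h s * ((boolSign (s i) - h i) * (boolSign (s j) - h j)) =
      ∏ l, (1 + boolSign (s l) * h l) / 2 * ((if l = i then boolSign (s l) - h l else 1) *
        (if l = j then boolSign (s l) - h l else 1)) := by
    intro s
    rw [Finset.prod_mul_distrib, Finset.prod_mul_distrib, Finset.prod_ite_eq' Finset.univ i,
      Finset.prod_ite_eq' Finset.univ j, signWeight]
    simp
  simp only [e]
  rw [sum_prod_bool fun l b => (1 + boolSign b * h l) / 2 *
    ((if l = i then boolSign b - h l else 1) * (if l = j then boolSign b - h l else 1))]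
  split_ifs with hij
  · subst hij
    rw [Finset.prod_eq_single i]
    · simp [boolSign]
      ring
    · intro l _ hl
      simp [boolSign, hl]
      ring
    · simp
  · refine Finset.prod_eq_zero (Finset.mem_univ i) ?_
    simp [boolSign, hij]
    ring

lemma sum_signWeight_mul_affine (h a : ι → ℝ) (r : ℝ) :
    ∑ s, signWeight h s * (r + ∑ j, (boolSign (s j) - h j) * a j) = r := by
  simp only [mul_add, Finset.sum_add_distrib, Finset.mul_sum]
  rw [← Finset.sum_mul, sum_signWeight, one_mul, Finset.sum_comm]
  simp only [← mul_assoc, ← Finset.sum_mul, sum_signWeight_mul, zero_mul, Finset.sum_const_zero,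
    add_zero]

lemma sum_signWeight_mul_affine_sq (h a : ι → ℝ) (r : ℝ) :
    ∑ s, signWeight h s * (r + ∑ j, (boolSign (s j) - h j) * a j) ^ 2 =
      r ^ 2 + ∑ j, (1 - h j ^ 2) * a j ^ 2 := by
  have e : ∀ s : ι → Bool,
      signWeight h s * (r + ∑ j, (boolSign (s j) - h j) * a j) ^ 2 =
      2 * r * (signWeight h s * (r + ∑ j, (boolSign (s j) - h j) * a j)) -
        r ^ 2 * signWeight h s + ∑ i, ∑ j, signWeight h s *
          ((boolSign (s i) - h i) * (boolSign (s j) - h j)) * (a i * a j) := by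
    intro s
    have : ∑ i, ∑ j, signWeight h s *
        ((boolSign (s i) - h i) * (boolSign (s j) - h j)) * (a i * a j) =
        signWeight h s * (∑ j, (boolSign (s j) - h j) * a j) ^ 2 := by
      rw [sq, Finset.sum_mul_sum, Finset.mul_sum]
      refine Finset.sum_congr rfl fun i _ => ?_
      rw [Finset.mul_sum]
      exact Finset.sum_congr rfl fun j _ => by ring
    rw [this]
    ring
  simp only [e]
  rw [Finset.sum_add_distrib, Finset.sum_sub_distrib, ← Finset.mul_sum, ← Finset.mul_sum,
    sum_signWeight_mul_affine, sum_signWeight, Finset.sum_comm]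
  have e2 : ∀ i, ∑ s, ∑ j, signWeight h s *
      ((boolSign (s i) - h i) * (boolSign (s j) - h j)) * (a i * a j) =
      (1 - h i ^ 2) * a i ^ 2 := by
    intro i
    rw [Finset.sum_comm]
    simp only [← Finset.sum_mul, sum_signWeight_mul_mul, ite_mul, zero_mul, Finset.sum_ite_eq,
      Finset.mem_univ, if_true]
    ring
  simp only [e2]
  ring

lemma sum_signWeight_mul_affine_sq_le {h a : ι → ℝ} (ha : ∀ j, |a j| ≤ 1) (r : ℝ) :
    ∑ s, signWeight h s * (r + ∑ j, (boolSign (s j) - h j) * a j) ^ 2 ≤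
      r ^ 2 + Fintype.card ι := by
  rw [sum_signWeight_mul_affine_sq]
  gcongr
  calc ∑ j, (1 - h j ^ 2) * a j ^ 2 ≤ ∑ _j : ι, (1 : ℝ) := Finset.sum_le_sum fun j _ => by
        have h1 := (sq_le_one_iff_abs_le_one _).2 (ha j)
        nlinarith [mul_nonneg (sq_nonneg (h j)) (sq_nonneg (a j))]
    _ = Fintype.card ι := by simp

/-- Truncation to `[-l, l]`. -/
noncomputable def clip (l t : ℝ) : ℝ := max (-l) (min l t)

lemma clip_mem_Icc {l : ℝ} (hl : 0 ≤ l) (t : ℝ) : clip l t ∈ Set.Icc (-l) l :=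
  ⟨le_max_left _ _, max_le (by linarith) (min_le_left _ _)⟩

lemma clip_mono (l : ℝ) : Monotone (clip l) := fun _ _ h =>
  max_le_max le_rfl (min_le_min le_rfl h)

lemma clip_le_add {l : ℝ} (hl : 0 < l) (t : ℝ) : clip l t ≤ t + t ^ 2 / (4 * l) := by
  have h1 : t + t ^ 2 / (4 * l) = ((t + 2 * l) ^ 2) / (4 * l) - l := by field_simp; ring
  refine max_le ?_ ((min_le_right _ _).trans (le_add_of_nonneg_right (by positivity)))
  rw [h1]
  have : 0 ≤ ((t + 2 * l) ^ 2) / (4 * l) := by positivity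
  linarith

lemma sub_le_clip {l : ℝ} (hl : 0 < l) (t : ℝ) : t - t ^ 2 / (4 * l) ≤ clip l t := by
  have h1 : t - t ^ 2 / (4 * l) = l - ((t - 2 * l) ^ 2) / (4 * l) := by field_simp; ring
  refine le_trans (le_min ?_ (sub_le_self _ (by positivity))) (le_max_right _ _)
  rw [h1]
  exact sub_le_self _ (by positivity)

lemma sum_signWeight_mul_clip_le {h a : ι → ℝ} (hh : ∀ j, |h j| ≤ 1) (ha : ∀ j, |a j| ≤ 1)
    {l : ℝ} (hl : 0 < l) (c : ℝ) :
    ∑ s, signWeight h s * clip l (signScore s a - c) ≤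
      ((∑ j, h j ^ 2 / 2) - c) +
        (((∑ j, h j ^ 2 / 2) - c) ^ 2 + Fintype.card ι) / (4 * l) := by
  set R := (∑ j, h j ^ 2 / 2) - c with hR
  calc ∑ s, signWeight h s * clip l (signScore s a - c)
      ≤ ∑ s, signWeight h s * ((R + ∑ j, (boolSign (s j) - h j) * a j) +
          (R + ∑ j, (boolSign (s j) - h j) * a j) ^ 2 / (4 * l)) := by
        refine Finset.sum_le_sum fun s _ => mul_le_mul_of_nonneg_left ?_ (signWeight_nonneg hh s)
        refine (clip_mono l ?_).trans (clip_le_add hl _)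
        linarith [signScore_le s h a]
    _ = R + (∑ s, signWeight h s * (R + ∑ j, (boolSign (s j) - h j) * a j) ^ 2) / (4 * l) := by
        simp only [mul_add (signWeight h _) (R + _) _, ← mul_div_assoc]
        rw [Finset.sum_add_distrib, sum_signWeight_mul_affine, Finset.sum_div]
    _ ≤ _ := by
        gcongr
        exact sum_signWeight_mul_affine_sq_le ha R

lemma le_sum_signWeight_mul_clip {h : ι → ℝ} (hh : ∀ j, |h j| ≤ 1) {l : ℝ} (hl : 0 < l) (c : ℝ) :
    ((∑ j, h j ^ 2 / 2) - c) - (((∑ j, h j ^ 2 / 2) - c) ^ 2 + Fintype.card ι) / (4 * l) ≤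
      ∑ s, signWeight h s * clip l (signScore s h - c) := by
  set R := (∑ j, h j ^ 2 / 2) - c with hR
  calc R - (R ^ 2 + Fintype.card ι) / (4 * l)
      ≤ R - (∑ s, signWeight h s * (R + ∑ j, (boolSign (s j) - h j) * h j) ^ 2) / (4 * l) := by
        gcongr
        exact sum_signWeight_mul_affine_sq_le hh R
    _ = ∑ s, signWeight h s * ((R + ∑ j, (boolSign (s j) - h j) * h j) -
          (R + ∑ j, (boolSign (s j) - h j) * h j) ^ 2 / (4 * l)) := by
        simp only [mul_sub (signWeight h _) (R + _) _, ← mul_div_assoc]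
        rw [Finset.sum_sub_distrib, sum_signWeight_mul_affine, Finset.sum_div]
    _ ≤ _ := by
        refine Finset.sum_le_sum fun s _ => mul_le_mul_of_nonneg_left ?_ (signWeight_nonneg hh s)
        refine (sub_le_clip hl _).trans (clip_mono l ?_)
        rw [signScore_self]
        linarith

end Signs

section Testing

lemma integral_bind_kernel {X Y : Type*} [MeasurableSpace X] [MeasurableSpace Y] (μ : Measure X)
    [IsProbabilityMeasure μ] (κ : Kernel X Y) [IsMarkovKernel κ] {f : Y → ℝ}
    (hf : Integrable f (μ.bind κ)) : ∫ y, f y ∂(μ.bind κ) = ∫ x, ∫ y, f y ∂(κ x) ∂μ :=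
  Kernel.integral_comp (η := κ) (κ := Kernel.const Unit μ) (a := ()) hf

lemma integral_sub_integral_le_mul_tvDist {X : Type*} [MeasurableSpace X] (μ ν : Measure X)
    [IsProbabilityMeasure μ] [IsProbabilityMeasure ν] {f : X → ℝ} (hf : Measurable f) {l : ℝ}
    (hl : 0 < l) (h : ∀ x, f x ∈ Set.Icc (-l) l) :
    ∫ x, f x ∂μ - ∫ x, f x ∂ν ≤ 2 * l * tvDist μ ν := by
  have h1 := integral_sub_integral_le_tvDist μ ν (f := fun x => (f x + l) / (2 * l))
    ((hf.add_const l).div_const _) fun x => ⟨div_nonneg (by linarith [(h x).1]) (by positivity),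
      (div_le_one (by positivity)).2 (by linarith [(h x).2])⟩
  have hi : ∀ ρ : Measure X, [IsProbabilityMeasure ρ] →
      ∫ x, (f x + l) / (2 * l) ∂ρ = (∫ x, f x ∂ρ + l) / (2 * l) := fun ρ _ => by
    rw [integral_div, integral_add (integrable_of_mem_Icc hf h) (integrable_const _)]
    simp
  rw [hi μ, hi ν, ← sub_div, div_le_iff₀ (by positivity)] at h1
  linarith

variable {V : Type*}

/-- The posterior mean of a uniform sign given one observation, for the likelihoods `p`. -/
noncomputable def condSign (p : Bool → V → ℝ) (v : V) : ℝ :=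
  (p true v - p false v) / (p true v + p false v)

/-- The density of the uniform mixture of the two likelihoods. -/
noncomputable def mixDensity (p : Bool → V → ℝ) (v : V) : ℝ := (p true v + p false v) / 2

lemma abs_condSign_le_one {p : Bool → V → ℝ} (hp : ∀ b v, 0 ≤ p b v) (v : V) :
    |condSign p v| ≤ 1 := by
  have h1 := hp true v
  have h2 := hp false v
  rw [condSign, abs_div, abs_of_nonneg (add_nonneg h1 h2)]
  exact div_le_one_of_le₀ (abs_le.2 ⟨by linarith, by linarith⟩) (add_nonneg h1 h2)

lemma likelihood_eq {p : Bool → V → ℝ} (hp : ∀ b v, 0 ≤ p b v) (b : Bool) (v : V) :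
    p b v = 2 * (mixDensity p v * ((1 + boolSign b * condSign p v) / 2)) := by
  have h1 := hp true v
  have h2 := hp false v
  unfold mixDensity condSign
  rcases eq_or_ne (p true v + p false v) 0 with h | h
  · have h3 : p true v = 0 := by linarith
    have h4 : p false v = 0 := by linarith
    cases b <;> simp [h3, h4]
  · cases b <;> simp only [boolSign, if_true, Bool.false_eq_true, if_false] <;> field_simp <;> ring

lemma mixDensity_nonneg {p : Bool → V → ℝ} (hp : ∀ b v, 0 ≤ p b v) (v : V) :
    0 ≤ mixDensity p v := by
  have h1 := hp true v
  have h2 := hp false v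
  unfold mixDensity
  positivity

variable {ι : Type*} [Fintype ι]

lemma prod_likelihood_eq {p : Bool → V → ℝ} (hp : ∀ b v, 0 ≤ p b v) (s : ι → Bool) (x : ι → V) :
    ∏ j, p (s j) (x j) = 2 ^ Fintype.card ι *
      ((∏ j, mixDensity p (x j)) * signWeight (fun j => condSign p (x j)) s) := by
  simp only [likelihood_eq hp (s _), Finset.prod_mul_distrib, signWeight, Finset.prod_const,
    Finset.card_univ]

lemma sum_sq_condSign_mem_Icc {p : Bool → V → ℝ} (hp : ∀ b v, 0 ≤ p b v) (x : ι → V) :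
    ∑ j, condSign p (x j) ^ 2 / 2 ∈ Set.Icc (0 : ℝ) (Fintype.card ι) := by
  refine ⟨Finset.sum_nonneg fun j _ => by positivity, ?_⟩
  calc ∑ j, condSign p (x j) ^ 2 / 2 ≤ ∑ _j : ι, (1 : ℝ) := Finset.sum_le_sum fun j _ => by
        have := (sq_le_one_iff_abs_le_one _).2 (abs_condSign_le_one hp (x j))
        linarith
    _ = _ := by simp

variable [MeasurableSpace V]

/-- The measure with density `q` with respect to `B`. -/
noncomputable def densityMeasure (B : Measure V) (q : V → ℝ) : Measure V :=
  B.withDensity fun v => ENNReal.ofReal (q v)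

variable [Countable V] [MeasurableSingletonClass V]

lemma isProbabilityMeasure_mixDensity {B : Measure V} {p : Bool → V → ℝ} (hp : ∀ b v, 0 ≤ p b v)
    (hB : ∀ b, IsProbabilityMeasure (densityMeasure B (p b))) :
    IsProbabilityMeasure (densityMeasure B (mixDensity p)) := by
  constructor
  have h : ∀ b, ∫⁻ v, ENNReal.ofReal (p b v) ∂B = 1 := fun b => by
    have := (hB b).measure_univ
    rwa [densityMeasure, withDensity_apply _ MeasurableSet.univ, Measure.restrict_univ] at this
  rw [densityMeasure, withDensity_apply _ MeasurableSet.univ, Measure.restrict_univ]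
  have e : ∀ v, ENNReal.ofReal (mixDensity p v) =
      2⁻¹ * (ENNReal.ofReal (p true v) + ENNReal.ofReal (p false v)) := fun v => by
    rw [mixDensity, div_eq_inv_mul, ENNReal.ofReal_mul (by positivity),
      ENNReal.ofReal_add (hp _ _) (hp _ _), ENNReal.ofReal_inv_of_pos (by positivity)]
    simp
  simp only [e]
  rw [lintegral_const_mul _ Measurable.of_discrete, lintegral_add_left Measurable.of_discrete,
    h, h, one_add_one_eq_two, ENNReal.inv_mul_cancel (by simp) (by simp)]

lemma sum_integral_pi_densityMeasure [DecidableEq ι] {B : Measure V} [IsFiniteMeasure B]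
    {p : Bool → V → ℝ} (hp : ∀ b v, 0 ≤ p b v)
    (hB : ∀ b, IsProbabilityMeasure (densityMeasure B (p b))) {l : ℝ}
    (g : (ι → Bool) → (ι → V) → ℝ) (hg : ∀ s x, g s x ∈ Set.Icc (-l) l) :
    ∑ s, ∫ x, g s x ∂(Measure.pi fun j : ι => densityMeasure B (p (s j))) =
      2 ^ Fintype.card ι * ∫ x, ∑ s, signWeight (fun j => condSign p (x j)) s * g s x
        ∂(Measure.pi fun _ : ι => densityMeasure B (mixDensity p)) := by
  have hm := isProbabilityMeasure_mixDensity hp hB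
  unfold densityMeasure at hB hm ⊢
  have h1 : ∀ s : ι → Bool,
      Measure.pi (fun j : ι => B.withDensity fun v => ENNReal.ofReal (p (s j) v)) =
      (Measure.pi fun _ : ι => B).withDensity fun x => ENNReal.ofReal (∏ j, p (s j) (x j)) :=
    fun s => pi_withDensity_ofReal (fun _ => B) (fun j => p (s j)) fun _ _ => hp _ _
  have hintg : ∀ s : ι → Bool, Integrable (fun x : ι → V => (∏ j, p (s j) (x j)) * g s x)
      (Measure.pi fun _ : ι => B) := by
    intro s
    have : IsFiniteMeasure ((Measure.pi fun _ : ι => B).withDensity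
        fun x => ENNReal.ofReal (∏ j, p (s j) (x j))) := by
      rw [← h1]; infer_instance
    refine (integrable_of_isFiniteMeasure_withDensity Measurable.of_discrete
      fun x => Finset.prod_nonneg fun j _ => hp _ _).mul_bdd (c := l)
      Measurable.of_discrete.aestronglyMeasurable (Filter.Eventually.of_forall fun x => ?_)
    exact abs_le.2 (hg s x)
  have h2 : Measure.pi (fun _ : ι => B.withDensity fun v => ENNReal.ofReal (mixDensity p v)) =
      (Measure.pi fun _ : ι => B).withDensity
        fun x => ENNReal.ofReal (∏ j, mixDensity p (x j)) :=
    pi_withDensity_ofReal (fun _ => B) (fun _ => mixDensity p) fun _ => mixDensity_nonneg hp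
  rw [h2, integral_withDensity_ofReal Measurable.of_discrete
    (fun x => Finset.prod_nonneg fun j _ => mixDensity_nonneg hp _), ← integral_const_mul]
  simp only [h1]
  have h3 : ∀ s : ι → Bool, ∫ x, g s x ∂((Measure.pi fun _ : ι => B).withDensity
      fun x => ENNReal.ofReal (∏ j, p (s j) (x j))) =
      ∫ x, (∏ j, p (s j) (x j)) * g s x ∂(Measure.pi fun _ : ι => B) := fun s =>
    integral_withDensity_ofReal Measurable.of_discrete
      (fun x => Finset.prod_nonneg fun j _ => hp _ _) _
  simp only [h3]
  rw [← integral_finsetSum _ fun s _ => hintg s]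
  refine integral_congr_ae (Filter.Eventually.of_forall fun x => ?_)
  simp only [prod_likelihood_eq hp, Finset.mul_sum]
  exact Finset.sum_congr rfl fun s _ => by ring

/-- The squared posterior mean, averaged over the mixture. -/
noncomputable def signInfo (B : Measure V) (p : Bool → V → ℝ) : ℝ :=
  ∫ v, condSign p v ^ 2 ∂(densityMeasure B (mixDensity p))

lemma integral_sum_sq_condSign {ν : Measure V} [IsProbabilityMeasure ν] {p : Bool → V → ℝ}
    (hp : ∀ b v, 0 ≤ p b v) :
    ∫ x : ι → V, ∑ j, condSign p (x j) ^ 2 / 2 ∂(Measure.pi fun _ => ν) =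
      Fintype.card ι * (∫ v, condSign p v ^ 2 ∂ν) / 2 := by
  have hb : ∀ v, condSign p v ^ 2 / 2 ∈ Set.Icc (0 : ℝ) 1 := fun v => by
    have := (sq_le_one_iff_abs_le_one _).2 (abs_condSign_le_one hp v)
    constructor <;> [positivity; linarith]
  rw [integral_finsetSum _ fun j _ => integrable_of_mem_Icc Measurable.of_discrete
    fun x : ι → V => hb (x j)]
  have h : ∀ j : ι, ∫ x : ι → V, condSign p (x j) ^ 2 / 2 ∂(Measure.pi fun _ => ν) =
      (∫ v, condSign p v ^ 2 ∂ν) / 2 := fun j => by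
    rw [integral_comp_eval (μ := fun _ : ι => ν) (i := j) (f := fun v => condSign p v ^ 2 / 2)
      Measurable.of_discrete.aestronglyMeasurable, integral_div]
  simp only [h]
  simp
  ring

lemma integral_sq_sum_sq_condSign_le {ν : Measure V} [IsProbabilityMeasure ν] {p : Bool → V → ℝ}
    (hp : ∀ b v, 0 ≤ p b v) (c : ℝ) :
    ∫ x : ι → V, ((∑ j, condSign p (x j) ^ 2 / 2) - c) ^ 2 ∂(Measure.pi fun _ => ν) ≤
      (Fintype.card ι * (∫ v, condSign p v ^ 2 ∂ν) / 2 - c) ^ 2 + Fintype.card ι / 4 := by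
  have hb : ∀ v, condSign p v ^ 2 / 2 ∈ Set.Icc (0 : ℝ) 1 := fun v => by
    have := (sq_le_one_iff_abs_le_one _).2 (abs_condSign_le_one hp v)
    constructor <;> [positivity; linarith]
  let X : (ι → V) → ℝ := fun x => ∑ j, condSign p (x j) ^ 2 / 2
  have hXI : Integrable X (Measure.pi fun _ => ν) :=
    integrable_of_mem_Icc Measurable.of_discrete (sum_sq_condSign_mem_Icc hp)
  have hX2 : MemLp (fun x => X x - c) 2 (Measure.pi fun _ => ν) :=
    (memLp_of_bounded (Filter.Eventually.of_forall (sum_sq_condSign_mem_Icc hp))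
      Measurable.of_discrete.aestronglyMeasurable 2).sub (memLp_const c)
  have hvar : Var[X; Measure.pi fun _ => ν] ≤ Fintype.card ι / 4 := by
    have h1 := variance_sum_pi (μ := fun _ : ι => ν)
      (X := fun _ v => condSign p v ^ 2 / 2) fun i =>
        memLp_of_bounded (Filter.Eventually.of_forall hb)
          Measurable.of_discrete.aestronglyMeasurable 2
    have h2 : (∑ i : ι, fun x : ι → V => condSign p (x i) ^ 2 / 2) = X := by
      ext x; simp [X]
    rw [h2] at h1
    rw [h1]
    refine (Finset.sum_le_sum fun i _ => variance_le_sq_of_bounded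
      (Filter.Eventually.of_forall hb) Measurable.of_discrete.aemeasurable).trans ?_
    simp
    linarith
  have hv2 : Var[fun x => X x - c; Measure.pi fun _ => ν] = Var[X; Measure.pi fun _ => ν] :=
    variance_sub_const hXI.aestronglyMeasurable c
  have h3 := variance_eq_sub hX2
  have h4 : ∫ x, (X x - c) ∂(Measure.pi fun _ => ν) =
      Fintype.card ι * (∫ v, condSign p v ^ 2 ∂ν) / 2 - c := by
    rw [integral_sub hXI (integrable_const c), integral_sum_sq_condSign hp]
    simp
  rw [h4, hv2] at h3
  have h5 : ∫ x : ι → V, ((∑ j, condSign p (x j) ^ 2 / 2) - c) ^ 2 ∂(Measure.pi fun _ => ν) =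
      (Measure.pi fun _ : ι => ν)[(fun x => X x - c) ^ 2] := rfl
  rw [h5]
  linarith

end Testing

section Assouad

variable {V ι : Type*} [Fintype ι] [MeasurableSpace V] [Countable V] [MeasurableSingletonClass V]

lemma integral_quadratic_sum_sq_condSign {ν : Measure V} [IsProbabilityMeasure ν]
    {p : Bool → V → ℝ} (hp : ∀ b v, 0 ≤ p b v) {l : ℝ} (hl : 0 < l) (c : ℝ) :
    Integrable (fun x : ι → V => (∑ j, condSign p (x j) ^ 2 / 2) - c)
        (Measure.pi fun _ => ν) ∧
      Integrable (fun x : ι → V =>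
        (((∑ j, condSign p (x j) ^ 2 / 2) - c) ^ 2 + Fintype.card ι) / (4 * l))
        (Measure.pi fun _ => ν) ∧
      ∫ x : ι → V, ((∑ j, condSign p (x j) ^ 2 / 2) - c) ∂(Measure.pi fun _ => ν) =
        Fintype.card ι * (∫ v, condSign p v ^ 2 ∂ν) / 2 - c ∧
      ∫ x : ι → V, (((∑ j, condSign p (x j) ^ 2 / 2) - c) ^ 2 + Fintype.card ι) / (4 * l)
          ∂(Measure.pi fun _ => ν) ≤
        ((Fintype.card ι * (∫ v, condSign p v ^ 2 ∂ν) / 2 - c) ^ 2 + 5 / 4 * Fintype.card ι) /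
          (4 * l) := by
  have hXI : Integrable (fun x : ι → V => ∑ j, condSign p (x j) ^ 2 / 2)
      (Measure.pi fun _ => ν) :=
    integrable_of_mem_Icc Measurable.of_discrete (sum_sq_condSign_mem_Icc hp)
  have hX2 : Integrable (fun x : ι → V => ((∑ j, condSign p (x j) ^ 2 / 2) - c) ^ 2)
      (Measure.pi fun _ => ν) :=
    ((memLp_of_bounded (Filter.Eventually.of_forall (sum_sq_condSign_mem_Icc hp))
      Measurable.of_discrete.aestronglyMeasurable 2).sub (memLp_const c)).integrable_sq
  refine ⟨hXI.sub (integrable_const c), (hX2.add (integrable_const _)).div_const _, ?_, ?_⟩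
  · rw [integral_sub hXI (integrable_const c), integral_sum_sq_condSign hp]
    simp
  · rw [integral_div, integral_add hX2 (integrable_const _)]
    have := integral_sq_sum_sq_condSign_le (ι := ι) (ν := ν) hp c
    simp only [integral_const, probReal_univ, one_smul]
    exact div_le_div_of_nonneg_right (by linarith) (by positivity)

/-- A lower bound for the accuracy of a transformation from experiments with base measure `B` to
experiments with base measure `B'`, in terms of the gain of information about random signs. -/
lemma signInfo_gain_le {B B' : Measure V} [IsFiniteMeasure B] [IsFiniteMeasure B']
    {p : Bool → V → ℝ} (hp : ∀ b v, 0 ≤ p b v)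
    (hB : ∀ b, IsProbabilityMeasure (densityMeasure B (p b)))
    (hB' : ∀ b, IsProbabilityMeasure (densityMeasure B' (p b)))
    (K : Kernel (ι → V) (ι → V)) [IsMarkovKernel K] {ε : ℝ}
    (hK : ∀ s : ι → Bool, tvDist (Measure.pi fun j => densityMeasure B' (p (s j)))
      ((Measure.pi fun j => densityMeasure B (p (s j))).bind K) ≤ ε)
    {l : ℝ} (hl : 0 < l) {D : ℝ} (hD : D = Fintype.card ι * (signInfo B' p - signInfo B p) / 2) :
    D - (D ^ 2 + 5 / 2 * Fintype.card ι) / (4 * l) ≤ 2 * l * ε := by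
  classical
  have hm := isProbabilityMeasure_mixDensity hp hB
  have hm' := isProbabilityMeasure_mixDensity hp hB'
  set c : ℝ := Fintype.card ι * signInfo B' p / 2 with hc
  let f : (ι → Bool) → (ι → V) → ℝ := fun s y =>
    clip l (signScore s (fun j => condSign p (y j)) - c)
  have hf : ∀ s y, f s y ∈ Set.Icc (-l) l := fun s y => clip_mem_Icc hl.le _
  have hh : ∀ (x : ι → V) j, |condSign p (x j)| ≤ 1 := fun x j => abs_condSign_le_one hp _
  have hfK : ∀ s x, ∫ y, f s y ∂(K x) ∈ Set.Icc (-l) l := by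
    intro s x
    have hi : Integrable (f s) (K x) := integrable_of_mem_Icc Measurable.of_discrete (hf s)
    have h1 := integral_mono (integrable_const (-l)) hi fun y => (hf s y).1
    have h2 := integral_mono hi (integrable_const l) fun y => (hf s y).2
    simp only [integral_const, probReal_univ, one_smul] at h1 h2
    exact ⟨h1, h2⟩
  have hs : ∀ s : ι → Bool,
      ∫ y, f s y ∂(Measure.pi fun j => densityMeasure B' (p (s j))) -
        ∫ x, ∫ y, f s y ∂(K x) ∂(Measure.pi fun j => densityMeasure B (p (s j))) ≤
      2 * l * ε := by
    intro s
    rw [← integral_bind_kernel _ K (integrable_of_mem_Icc Measurable.of_discrete (hf s))]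
    exact (integral_sub_integral_le_mul_tvDist _ _ Measurable.of_discrete hl (hf s)).trans
      (mul_le_mul_of_nonneg_left (hK s) (by positivity))
  have hsum := Finset.sum_le_sum fun s (_ : s ∈ Finset.univ) => hs s
  rw [Finset.sum_sub_distrib, sum_integral_pi_densityMeasure hp hB' f hf,
    sum_integral_pi_densityMeasure hp hB (fun s x => ∫ y, f s y ∂(K x)) hfK, ← mul_sub,
    Finset.sum_const, Finset.card_univ, Fintype.card_fun, Fintype.card_bool, nsmul_eq_mul,
    Nat.cast_pow, Nat.cast_ofNat] at hsum
  have hsum2 := le_of_mul_le_mul_left hsum (by positivity)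
  obtain ⟨hi1, hi2, e1, e2⟩ := integral_quadratic_sum_sq_condSign (ι := ι)
    (ν := densityMeasure B (mixDensity p)) hp hl c
  obtain ⟨hi1', hi2', e1', e2'⟩ := integral_quadratic_sum_sq_condSign (ι := ι)
    (ν := densityMeasure B' (mixDensity p)) hp hl c
  have hbd : ∀ g : (ι → Bool) → (ι → V) → ℝ, (∀ s x, g s x ∈ Set.Icc (-l) l) → ∀ x : ι → V,
      ∑ s, signWeight (fun j => condSign p (x j)) s * g s x ∈ Set.Icc (-l) l := by
    intro g hg x
    have hw := sum_signWeight fun j => condSign p (x j)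
    constructor
    · calc -l = ∑ s, signWeight (fun j => condSign p (x j)) s * -l := by
            rw [← Finset.sum_mul, hw, one_mul]
        _ ≤ _ := Finset.sum_le_sum fun s _ =>
            mul_le_mul_of_nonneg_left (hg s x).1 (signWeight_nonneg (hh x) s)
    · calc _ ≤ ∑ s, signWeight (fun j => condSign p (x j)) s * l := Finset.sum_le_sum fun s _ =>
            mul_le_mul_of_nonneg_left (hg s x).2 (signWeight_nonneg (hh x) s)
        _ = l := by rw [← Finset.sum_mul, hw, one_mul]
  have hlow := integral_mono (hi1'.sub hi2')
    (integrable_of_mem_Icc Measurable.of_discrete (hbd f hf))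
    fun x => le_sum_signWeight_mul_clip (hh x) hl c
  have hup := integral_mono
    (integrable_of_mem_Icc Measurable.of_discrete (hbd (fun s x => ∫ y, f s y ∂(K x)) hfK))
    (hi1.add hi2) fun x => by
      have hi : ∀ s : ι → Bool, Integrable
          (fun y => signWeight (fun j => condSign p (x j)) s * f s y) (K x) := fun s =>
        (integrable_of_mem_Icc Measurable.of_discrete (hf s)).const_mul _
      simp only [← integral_const_mul]
      rw [← integral_finsetSum _ fun s _ => hi s]
      refine (integral_mono (integrable_finsetSum _ fun s _ => hi s) (integrable_const _)
        fun y => sum_signWeight_mul_clip_le (hh x) (hh y) hl c).trans ?_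
      simp
  rw [integral_add' hi1 hi2, e1] at hup
  rw [integral_sub' hi1' hi2', e1'] at hlow
  have q1 : Fintype.card ι * (∫ v, condSign p v ^ 2 ∂(densityMeasure B (mixDensity p))) / 2 - c =
      -D := by
    rw [hD, hc]; unfold signInfo; ring
  have q2 : Fintype.card ι * (∫ v, condSign p v ^ 2 ∂(densityMeasure B' (mixDensity p))) / 2 - c =
      0 := by
    rw [hc]; unfold signInfo; ring
  rw [q1] at hup e2
  rw [q2] at hlow e2'
  have q3 : (D ^ 2 + 5 / 2 * Fintype.card ι) / (4 * l) =
      ((-D) ^ 2 + 5 / 4 * Fintype.card ι) / (4 * l) +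
        (0 ^ 2 + 5 / 4 * Fintype.card ι) / (4 * l) := by
    ring
  linarith

lemma sq_signInfo_gain_le {B B' : Measure V} [IsFiniteMeasure B] [IsFiniteMeasure B']
    {p : Bool → V → ℝ} (hp : ∀ b v, 0 ≤ p b v)
    (hB : ∀ b, IsProbabilityMeasure (densityMeasure B (p b)))
    (hB' : ∀ b, IsProbabilityMeasure (densityMeasure B' (p b)))
    (K : Kernel (ι → V) (ι → V)) [IsMarkovKernel K] {ε : ℝ}
    (hK : ∀ s : ι → Bool, tvDist (Measure.pi fun j => densityMeasure B' (p (s j)))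
      ((Measure.pi fun j => densityMeasure B (p (s j))).bind K) ≤ ε)
    {κ : ℝ} (hκ0 : 0 < κ) (hκ1 : κ ≤ 1) (hd : 1 ≤ Fintype.card ι)
    (hκ : κ * √(Fintype.card ι) ≤ Fintype.card ι * (signInfo B' p - signInfo B p) / 2) :
    κ ^ 2 / 10 ≤ ε := by
  set D : ℝ := Fintype.card ι * (signInfo B' p - signInfo B p) / 2 with hD
  set d : ℝ := (Fintype.card ι : ℝ) with hd'
  have hd0 : 0 < d := by rw [hd']; exact_mod_cast hd
  have hD0 : 0 < D := lt_of_lt_of_le (by positivity) hκ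
  have hsq : κ ^ 2 * d ≤ D ^ 2 := by
    calc κ ^ 2 * d = (κ * √d) ^ 2 := by rw [mul_pow, Real.sq_sqrt hd0.le]
      _ ≤ D ^ 2 := by gcongr
  have h := signInfo_gain_le hp hB hB' K hK (l := (D ^ 2 + 5 / 2 * d) / D) (by positivity) hD
  have e : (D ^ 2 + 5 / 2 * d) / (4 * ((D ^ 2 + 5 / 2 * d) / D)) = D / 4 := by
    field_simp
  rw [← hd', e] at h
  have h2 : D - D / 4 ≤ 2 * ((D ^ 2 + 5 / 2 * d) * ε) / D := by
    calc _ ≤ _ := h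
      _ = _ := by ring
  rw [le_div_iff₀ hD0] at h2
  by_contra! hlt
  have h3 : (D ^ 2 + 5 / 2 * d) * ε < (D ^ 2 + 5 / 2 * d) * (κ ^ 2 / 10) := by gcongr
  have h4 : κ ^ 2 ≤ 1 := pow_le_one₀ hκ0.le hκ1
  have h5 : D ^ 2 * κ ^ 2 ≤ D ^ 2 := mul_le_of_le_one_right (sq_nonneg _) h4
  nlinarith [sq_pos_of_pos hD0]

end Assouad

section PoissonSigns

section

variable {ι : Type*} [Fintype ι]

lemma integrable_prod_pow_poissonVec (a : ι → ℝ≥0) (z : ι → ℝ) :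
    Integrable (fun x : ι → ℕ => ∏ i, z i ^ x i) (poissonVec a) :=
  Integrable.fintype_prod (f := fun i (n : ℕ) => z i ^ n)
    fun i => integrable_pow_poissonMeasure (a i) (z i)

lemma integral_prod_pow_poissonVec (a : ι → ℝ≥0) (z : ι → ℝ) :
    ∫ x : ι → ℕ, ∏ i, z i ^ x i ∂(poissonVec a) = ∏ i, Real.exp (a i * (z i - 1)) := by
  rw [poissonVec, integral_fintype_prod_eq_prod (f := fun i (n : ℕ) => z i ^ n)]
  simp only [integral_pow_poissonMeasure]

end

/-- The likelihood of a pair of Poisson counts whose rates are perturbed by `1 ± δ`, the signs being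
determined by `b`. -/
noncomputable def signLikelihood (δ : ℝ) (b : Bool) (v : Bool → ℕ) : ℝ :=
  ∏ i, (1 + boolSign b * boolSign i * δ) ^ v i

lemma signLikelihood_add (δ : ℝ) (b : Bool) (v w : Bool → ℕ) :
    signLikelihood δ b (v + w) = signLikelihood δ b v * signLikelihood δ b w := by
  simp only [signLikelihood, Pi.add_apply, pow_add, Finset.prod_mul_distrib]

lemma one_add_sign_mul_pos {δ : ℝ} (h0 : 0 ≤ δ) (h1 : δ < 1) (b i : Bool) :
    0 < 1 + boolSign b * boolSign i * δ := by
  cases b <;> cases i <;> simp [boolSign] <;> linarith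

lemma signLikelihood_pos {δ : ℝ} (h0 : 0 ≤ δ) (h1 : δ < 1) (b : Bool) (v : Bool → ℕ) :
    0 < signLikelihood δ b v :=
  Finset.prod_pos fun i _ => pow_pos (one_add_sign_mul_pos h0 h1 b i) _

lemma integrable_signLikelihood (r : ℝ≥0) (δ : ℝ) (b : Bool) :
    Integrable (signLikelihood δ b) (poissonVec fun _ => r) :=
  integrable_prod_pow_poissonVec _ _

lemma integral_signLikelihood (r : ℝ≥0) (δ : ℝ) (b : Bool) :
    ∫ v, signLikelihood δ b v ∂(poissonVec fun _ => r) = 1 := by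
  unfold signLikelihood
  rw [integral_prod_pow_poissonVec, ← Real.exp_sum, Real.exp_eq_one_iff]
  cases b <;> simp [boolSign]

/-- The multiplicative perturbation `1 ± δ` of a Poisson rate. -/
noncomputable def signRate (δ : ℝ) (b i : Bool) : ℝ≥0 :=
  (1 + boolSign b * boolSign i * δ).toNNReal

lemma coe_signRate {δ : ℝ} (h0 : 0 ≤ δ) (h1 : δ < 1) (b i : Bool) :
    (signRate δ b i : ℝ) = 1 + boolSign b * boolSign i * δ :=
  Real.coe_toNNReal _ (one_add_sign_mul_pos h0 h1 b i).le

lemma densityMeasure_signLikelihood (r : ℝ≥0) {δ : ℝ} (h0 : 0 ≤ δ) (h1 : δ < 1) (b : Bool) :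
    densityMeasure (poissonVec fun _ => r) (signLikelihood δ b) =
      poissonVec fun i => r * signRate δ b i := by
  rw [poissonVec_mul_eq_withDensity]
  unfold densityMeasure signLikelihood
  congr 1
  ext v
  rw [Finset.prod_mul_distrib, ← Real.exp_sum]
  have : ∑ i, ((r : ℝ) - r * (1 + boolSign b * boolSign i * δ)) = 0 := by
    cases b <;> simp [boolSign] <;> ring
  simp only [coe_signRate h0 h1, this, Real.exp_zero, one_mul]

lemma info_add_ge {a b u v h : ℝ} (ha : 0 < a) (hb : 0 < b) (hu : 0 < u) (hv : 0 < v) :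
    h * (a * u - b * v) - h ^ 2 * (a * u + b * v) / 2 ≤
      ((a * u - b * v) / (a * u + b * v)) ^ 2 * ((a * u + b * v) / 2) := by
  have hs : 0 < a * u + b * v := by positivity
  have e : ((a * u - b * v) / (a * u + b * v)) ^ 2 * ((a * u + b * v) / 2) -
      (h * (a * u - b * v) - h ^ 2 * (a * u + b * v) / 2) =
      (a * u + b * v) / 2 * ((a * u - b * v) / (a * u + b * v) - h) ^ 2 := by
    field_simp
    ring
  have : 0 ≤ (a * u + b * v) / 2 * ((a * u - b * v) / (a * u + b * v) - h) ^ 2 := by positivity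
  linarith

lemma info_add_ge_of_single {a b δ h : ℝ} (ha : 0 < a) (hb : 0 < b) (h0 : 0 ≤ δ) (h1 : δ < 1)
    (hh : h = (a - b) / (a + b)) :
    h * (a * (1 + δ) - b * (1 - δ)) - h ^ 2 * (a * (1 + δ) + b * (1 - δ)) / 2 +
        δ ^ 2 / 2 * ((1 - h ^ 2) ^ 2 * ((a + b) / 2)) ≤
      ((a * (1 + δ) - b * (1 - δ)) / (a * (1 + δ) + b * (1 - δ))) ^ 2 *
        ((a * (1 + δ) + b * (1 - δ)) / 2) := by
  have h2 : 0 < 1 - δ := by linarith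
  have hs : 0 < a * (1 + δ) + b * (1 - δ) := by positivity
  set S := a * (1 + δ) + b * (1 - δ) with hS
  have hab : 0 < a + b := by positivity
  have e1 : δ ^ 2 / 2 * ((1 - h ^ 2) ^ 2 * ((a + b) / 2)) =
      4 * (δ * a * b) ^ 2 / (a + b) ^ 3 := by
    rw [hh]
    field_simp
    ring
  have e2 : ((a * (1 + δ) - b * (1 - δ)) / S) ^ 2 * (S / 2) -
      (h * (a * (1 + δ) - b * (1 - δ)) - h ^ 2 * S / 2) =
      8 * (δ * a * b) ^ 2 / (S * (a + b) ^ 2) := by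
    have e3 : ((a * (1 + δ) - b * (1 - δ)) / S) ^ 2 * (S / 2) -
        (h * (a * (1 + δ) - b * (1 - δ)) - h ^ 2 * S / 2) =
        S / 2 * ((a * (1 + δ) - b * (1 - δ)) / S - h) ^ 2 := by
      field_simp
      ring
    have e4 : (a * (1 + δ) - b * (1 - δ)) / S - h = 4 * (δ * a * b) / (S * (a + b)) := by
      rw [hh, div_sub_div _ _ hs.ne' hab.ne', hS]
      congr 1
      ring
    rw [e3, e4]
    field_simp
    ring
  have h3 : 4 * (δ * a * b) ^ 2 / (a + b) ^ 3 ≤ 8 * (δ * a * b) ^ 2 / (S * (a + b) ^ 2) := by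
    rw [div_le_div_iff₀ (by positivity) (by positivity)]
    have h4 : S ≤ 2 * (a + b) := by rw [hS]; nlinarith
    calc 4 * (δ * a * b) ^ 2 * (S * (a + b) ^ 2)
        ≤ 4 * (δ * a * b) ^ 2 * (2 * (a + b) * (a + b) ^ 2) := by gcongr
      _ = _ := by ring
  linarith

/-- The integrand of `signInfo` with respect to the base measure. -/
noncomputable def infoDensity (δ : ℝ) (v : Bool → ℕ) : ℝ :=
  condSign (signLikelihood δ) v ^ 2 * mixDensity (signLikelihood δ) v

lemma infoDensity_nonneg {δ : ℝ} (h0 : 0 ≤ δ) (h1 : δ < 1) (v : Bool → ℕ) :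
    0 ≤ infoDensity δ v :=
  mul_nonneg (sq_nonneg _) (mixDensity_nonneg (fun b v => (signLikelihood_pos h0 h1 b v).le) v)

lemma infoDensity_le {δ : ℝ} (h0 : 0 ≤ δ) (h1 : δ < 1) (v : Bool → ℕ) :
    infoDensity δ v ≤ mixDensity (signLikelihood δ) v := by
  have hp := fun b v => (signLikelihood_pos h0 h1 b v).le
  exact mul_le_of_le_one_left (mixDensity_nonneg hp v)
    ((sq_le_one_iff_abs_le_one _).2 (abs_condSign_le_one hp v))

lemma integrable_mixDensity (r : ℝ≥0) (δ : ℝ) :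
    Integrable (mixDensity (signLikelihood δ)) (poissonVec fun _ => r) :=
  ((integrable_signLikelihood r δ true).add (integrable_signLikelihood r δ false)).div_const 2

lemma integral_mixDensity (r : ℝ≥0) (δ : ℝ) :
    ∫ v, mixDensity (signLikelihood δ) v ∂(poissonVec fun _ => r) = 1 := by
  unfold mixDensity
  rw [integral_div, integral_add (integrable_signLikelihood r δ true)
    (integrable_signLikelihood r δ false), integral_signLikelihood, integral_signLikelihood]
  norm_num

lemma integrable_infoDensity (r : ℝ≥0) {δ : ℝ} (h0 : 0 ≤ δ) (h1 : δ < 1) :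
    Integrable (infoDensity δ) (poissonVec fun _ => r) := by
  refine (integrable_mixDensity r δ).mono' Measurable.of_discrete.aestronglyMeasurable
    (Filter.Eventually.of_forall fun v => ?_)
  rw [Real.norm_of_nonneg (infoDensity_nonneg h0 h1 v)]
  exact infoDensity_le h0 h1 v

lemma signInfo_eq (r : ℝ≥0) {δ : ℝ} (h0 : 0 ≤ δ) (h1 : δ < 1) :
    signInfo (poissonVec fun _ => r) (signLikelihood δ) =
      ∫ v, infoDensity δ v ∂(poissonVec fun _ => r) := by
  unfold signInfo densityMeasure infoDensity
  rw [integral_withDensity_ofReal Measurable.of_discrete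
    (mixDensity_nonneg fun b v => (signLikelihood_pos h0 h1 b v).le)]
  simp only [mul_comm]

lemma signInfo_le (r : ℝ≥0) {δ : ℝ} (h0 : 0 ≤ δ) (h1 : δ < 1) :
    signInfo (poissonVec fun _ => r) (signLikelihood δ) ≤ 4 * r * δ ^ 2 := by
  set g : ℝ := √(1 - δ ^ 2) with hg
  have hd : δ ^ 2 ≤ 1 := pow_le_one₀ h0 h1.le
  have hg2 : g ^ 2 = 1 - δ ^ 2 := Real.sq_sqrt (by linarith)
  have hg0 : 0 ≤ g := Real.sqrt_nonneg _
  have hI := integrable_prod_pow_poissonVec (fun _ : Bool => r) fun _ => g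
  have hpt : ∀ v, infoDensity δ v ≤
      2 * mixDensity (signLikelihood δ) v - 2 * ∏ i : Bool, g ^ v i := by
    intro v
    have ha := signLikelihood_pos h0 h1 true v
    have hb := signLikelihood_pos h0 h1 false v
    have hs : (∏ i : Bool, g ^ v i) ^ 2 = signLikelihood δ true v * signLikelihood δ false v := by
      rw [signLikelihood, signLikelihood, ← Finset.prod_mul_distrib, ← Finset.prod_pow]
      refine Finset.prod_congr rfl fun i _ => ?_
      rw [← mul_pow, ← pow_mul, mul_comm, pow_mul, hg2]
      congr 1
      cases i <;> simp [boolSign] <;> ring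
    have hs0 : 0 ≤ ∏ i : Bool, g ^ v i := Finset.prod_nonneg fun i _ => pow_nonneg hg0 _
    unfold infoDensity condSign mixDensity
    generalize signLikelihood δ true v = a at *
    generalize signLikelihood δ false v = b at *
    generalize ∏ i : Bool, g ^ v i = s at *
    have hab : 0 < a + b := by positivity
    have e : ((a - b) / (a + b)) ^ 2 * ((a + b) / 2) = (a - b) ^ 2 / (2 * (a + b)) := by
      field_simp
    rw [e, div_le_iff₀ (by positivity)]
    have hpos : 0 ≤ a + b - 2 * s := by nlinarith [sq_nonneg (a - b)]
    nlinarith [mul_nonneg hpos hs0, mul_nonneg hpos hpos]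
  rw [signInfo_eq r h0 h1]
  have hI2 := ((integrable_mixDensity r δ).const_mul 2).sub (hI.const_mul 2)
  refine (integral_mono (integrable_infoDensity r h0 h1) hI2 hpt).trans ?_
  rw [integral_sub' ((integrable_mixDensity r δ).const_mul 2) (hI.const_mul 2), integral_const_mul,
    integral_const_mul, integral_mixDensity, integral_prod_pow_poissonVec, ← Real.exp_sum]
  have h2 := Real.add_one_le_exp (∑ _i : Bool, (r : ℝ) * (g - 1))
  have h3 : ∑ _i : Bool, (r : ℝ) * (g - 1) = 2 * (r * (g - 1)) := by simp
  have h4 : 1 - g ≤ δ ^ 2 := by nlinarith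
  have h5 : (r : ℝ) * (1 - g) ≤ r * δ ^ 2 := mul_le_mul_of_nonneg_left h4 r.2
  rw [h3] at h2 ⊢
  linarith

end PoissonSigns

section InfoGain

variable {δ : ℝ}

/-- The quadratic lower bound for `infoDensity δ (v + w)` in terms of the estimate made from `v`. -/
noncomputable def infoTangent (δ : ℝ) (v w : Bool → ℕ) : ℝ :=
  condSign (signLikelihood δ) v * (signLikelihood δ true v * signLikelihood δ true w -
      signLikelihood δ false v * signLikelihood δ false w) -
    condSign (signLikelihood δ) v ^ 2 * (signLikelihood δ true v * signLikelihood δ true w +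
      signLikelihood δ false v * signLikelihood δ false w) / 2

lemma integrable_infoTangent (r : ℝ≥0) (δ : ℝ) (v : Bool → ℕ) :
    Integrable (infoTangent δ v) (poissonVec fun _ => r) :=
  ((((integrable_signLikelihood r δ true).const_mul _).sub
    ((integrable_signLikelihood r δ false).const_mul _)).const_mul _).sub
  (((((integrable_signLikelihood r δ true).const_mul _).add
    ((integrable_signLikelihood r δ false).const_mul _)).const_mul _).div_const 2)

lemma integral_infoTangent (r : ℝ≥0) (h0 : 0 ≤ δ) (h1 : δ < 1) (v : Bool → ℕ) :
    ∫ w, infoTangent δ v w ∂(poissonVec fun _ => r) = infoDensity δ v := by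
  have i1 := (integrable_signLikelihood r δ true).const_mul (signLikelihood δ true v)
  have i2 := (integrable_signLikelihood r δ false).const_mul (signLikelihood δ false v)
  have i3 : Integrable (fun w => signLikelihood δ true v * signLikelihood δ true w -
      signLikelihood δ false v * signLikelihood δ false w) (poissonVec fun _ => r) := i1.sub i2
  have i4 : Integrable (fun w => signLikelihood δ true v * signLikelihood δ true w +
      signLikelihood δ false v * signLikelihood δ false w) (poissonVec fun _ => r) := i1.add i2
  unfold infoTangent
  rw [integral_sub (i3.const_mul _) ((i4.const_mul _).div_const 2),
    integral_div, integral_const_mul, integral_const_mul, integral_sub i1 i2, integral_add i1 i2,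
    integral_const_mul, integral_const_mul, integral_signLikelihood, integral_signLikelihood]
  have ha := signLikelihood_pos h0 h1 true v
  have hb := signLikelihood_pos h0 h1 false v
  unfold infoDensity condSign mixDensity
  field_simp
  ring

/-- One observation in the first of the two cells. -/
def firstCell : Bool → ℕ := fun b => if b then 1 else 0

lemma signLikelihood_firstCell (δ : ℝ) (b : Bool) :
    signLikelihood δ b firstCell = 1 + boolSign b * δ := by
  simp [signLikelihood, firstCell, boolSign]

lemma infoTangent_le (h0 : 0 ≤ δ) (h1 : δ < 1) (c : ℝ) (v w : Bool → ℕ) :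
    infoTangent δ v w + δ ^ 2 / 2 * ((2 * c - c ^ 2) * mixDensity (signLikelihood δ) v -
        2 * c * infoDensity δ v) * Set.indicator {firstCell} (fun _ => (1 : ℝ)) w ≤
      infoDensity δ (v + w) := by
  have ha := signLikelihood_pos h0 h1 true v
  have hb := signLikelihood_pos h0 h1 false v
  by_cases hw : w = firstCell
  · subst hw
    rw [Set.indicator_of_mem (Set.mem_singleton _), mul_one]
    have h2 := info_add_ge_of_single ha hb h0 h1 (h := condSign (signLikelihood δ) v) rfl
    have h3 : (2 * c - c ^ 2) * mixDensity (signLikelihood δ) v - 2 * c * infoDensity δ v ≤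
        (1 - condSign (signLikelihood δ) v ^ 2) ^ 2 *
          ((signLikelihood δ true v + signLikelihood δ false v) / 2) := by
      unfold infoDensity mixDensity
      have h4 : 0 ≤ (signLikelihood δ true v + signLikelihood δ false v) / 2 *
        (1 - condSign (signLikelihood δ) v ^ 2 - c) ^ 2 := by positivity
      linarith
    have h5 := mul_le_mul_of_nonneg_left h3 (show 0 ≤ δ ^ 2 / 2 by positivity)
    have e1 : infoTangent δ v firstCell =
        condSign (signLikelihood δ) v * (signLikelihood δ true v * (1 + δ) -
          signLikelihood δ false v * (1 - δ)) - condSign (signLikelihood δ) v ^ 2 *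
          (signLikelihood δ true v * (1 + δ) + signLikelihood δ false v * (1 - δ)) / 2 := by
      simp [infoTangent, signLikelihood_firstCell, boolSign, sub_eq_add_neg]
    have e2 : infoDensity δ (v + firstCell) =
        ((signLikelihood δ true v * (1 + δ) - signLikelihood δ false v * (1 - δ)) /
          (signLikelihood δ true v * (1 + δ) + signLikelihood δ false v * (1 - δ))) ^ 2 *
        ((signLikelihood δ true v * (1 + δ) + signLikelihood δ false v * (1 - δ)) / 2) := by
      simp [infoDensity, condSign, mixDensity, signLikelihood_add, signLikelihood_firstCell,
        boolSign, sub_eq_add_neg]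
    rw [e1, e2]
    linarith
  · rw [Set.indicator_of_notMem (by simpa using hw), mul_zero, add_zero]
    have h2 := info_add_ge ha hb (signLikelihood_pos h0 h1 true w)
      (signLikelihood_pos h0 h1 false w) (h := condSign (signLikelihood δ) v)
    simpa only [infoTangent, infoDensity, condSign, mixDensity, signLikelihood_add] using h2

lemma poissonVec_real_firstCell (r : ℝ≥0) :
    (poissonVec fun _ : Bool => r).real {firstCell} = r * Real.exp (-2 * r) := by
  rw [Measure.real, poissonVec, Measure.pi_singleton]
  simp only [poissonMeasure_singleton, firstCell, Fintype.prod_bool]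
  simp only [if_true, Bool.false_eq_true, if_false]
  rw [← ENNReal.ofReal_mul (by positivity), ENNReal.toReal_ofReal (by positivity)]
  rw [show (-2 * r : ℝ) = -r + -r by ring, Real.exp_add]
  simp
  ring

lemma signInfo_add_ge (r t : ℝ≥0) (h0 : 0 ≤ δ) (h1 : δ < 1) (c : ℝ) :
    signInfo (poissonVec fun _ => r) (signLikelihood δ) +
        δ ^ 2 / 2 * (2 * c - c ^ 2 -
          2 * c * signInfo (poissonVec fun _ => r) (signLikelihood δ)) *
          (t * Real.exp (-2 * t)) ≤
      signInfo (poissonVec fun _ => r + t) (signLikelihood δ) := by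
  set κ : ℝ := t * Real.exp (-2 * t) with hκ
  rw [signInfo_eq r h0 h1, signInfo_eq (r + t) h0 h1]
  have hconv : (poissonVec fun _ : Bool => r + t) =
      ((poissonVec fun _ => r).prod (poissonVec fun _ => t)).map (fun z => z.1 + z.2) :=
    (poissonVec_conv (fun _ : Bool => r) fun _ => t).symm
  have hi := integrable_infoDensity (r + t) h0 h1
  rw [hconv, integrable_map_measure Measurable.of_discrete.aestronglyMeasurable
    (by fun_prop)] at hi
  have hi' : Integrable (fun z : (Bool → ℕ) × (Bool → ℕ) => infoDensity δ (z.1 + z.2))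
    ((poissonVec fun _ => r).prod (poissonVec fun _ => t)) := hi
  rw [hconv, integral_map (by fun_prop) Measurable.of_discrete.aestronglyMeasurable,
    integral_prod _ hi']
  let G : (Bool → ℕ) → ℝ := fun v => (2 * c - c ^ 2) * mixDensity (signLikelihood δ) v -
    2 * c * infoDensity δ v
  have iG : Integrable G (poissonVec fun _ => r) :=
    ((integrable_mixDensity r δ).const_mul _).sub ((integrable_infoDensity r h0 h1).const_mul _)
  have hG : ∫ v, G v ∂(poissonVec fun _ => r) =
      2 * c - c ^ 2 - 2 * c * ∫ v, infoDensity δ v ∂(poissonVec fun _ => r) := by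
    rw [integral_sub ((integrable_mixDensity r δ).const_mul _)
      ((integrable_infoDensity r h0 h1).const_mul _), integral_const_mul, integral_const_mul,
      integral_mixDensity, mul_one]
  have hinner : ∀ v, infoDensity δ v + δ ^ 2 / 2 * G v * κ ≤
      ∫ w, infoDensity δ (v + w) ∂(poissonVec fun _ => t) := by
    intro v
    have iI : Integrable (Set.indicator {firstCell} fun _ => (1 : ℝ))
        (poissonVec fun _ : Bool => t) :=
      (integrable_const 1).indicator (measurableSet_singleton _)
    have iR : Integrable (fun w => infoDensity δ (v + w)) (poissonVec fun _ => t) := by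
      refine (((integrable_signLikelihood t δ true).const_mul (signLikelihood δ true v)).add
        ((integrable_signLikelihood t δ false).const_mul (signLikelihood δ false v))
        |>.div_const 2).mono' Measurable.of_discrete.aestronglyMeasurable
        (Filter.Eventually.of_forall fun w => ?_)
      rw [Real.norm_of_nonneg (infoDensity_nonneg h0 h1 _)]
      simpa only [mixDensity, signLikelihood_add, Pi.add_apply] using infoDensity_le h0 h1 (v + w)
    have h := integral_mono ((integrable_infoTangent t δ v).add (iI.const_mul (δ ^ 2 / 2 * G v)))
      iR fun w => infoTangent_le h0 h1 c v w
    rw [integral_add' (integrable_infoTangent t δ v) (iI.const_mul _), integral_infoTangent t h0 h1,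
      integral_const_mul, integral_indicator_const _ (measurableSet_singleton _),
      poissonVec_real_firstCell, smul_eq_mul, mul_one] at h
    exact h
  have iL := (integrable_infoDensity r h0 h1).add ((iG.const_mul (δ ^ 2 / 2)).mul_const κ)
  have h := integral_mono iL hi'.integral_prod_left hinner
  rw [integral_add' (integrable_infoDensity r h0 h1) ((iG.const_mul (δ ^ 2 / 2)).mul_const κ),
    integral_mul_const, integral_const_mul, hG] at h
  exact h

lemma signInfo_mono (r t : ℝ≥0) (h0 : 0 ≤ δ) (h1 : δ < 1) :
    signInfo (poissonVec fun _ => r) (signLikelihood δ) ≤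
      signInfo (poissonVec fun _ => r + t) (signLikelihood δ) := by
  simpa using signInfo_add_ge r t h0 h1 0

lemma signInfo_add_ge_of_le_half (r t : ℝ≥0) (h0 : 0 ≤ δ) (h1 : δ < 1) (ht : t ≤ 1 / 2)
    (hr : 4 * r * δ ^ 2 ≤ 1 / 2) :
    signInfo (poissonVec fun _ => r) (signLikelihood δ) + δ ^ 2 * t / 24 ≤
      signInfo (poissonVec fun _ => r + t) (signLikelihood δ) := by
  refine le_trans ?_ (signInfo_add_ge r t h0 h1 (1 / 2))
  have h2 := (signInfo_le r h0 h1).trans hr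
  have ht' : (t : ℝ) ≤ 1 / 2 := by
    have := NNReal.coe_le_coe.2 ht
    simpa using this
  have h3 : (1 / 3 : ℝ) ≤ Real.exp (-2 * t) := by
    have h4 : Real.exp (-1) ≤ Real.exp (-2 * t) := Real.exp_le_exp.2 (by linarith)
    refine le_trans ?_ h4
    rw [Real.exp_neg, one_div]
    exact inv_anti₀ (Real.exp_pos 1) (by linarith [Real.exp_one_lt_d9])
  have h5 : δ ^ 2 / 2 * (1 / 4) * (t * (1 / 3)) ≤ δ ^ 2 / 2 * (2 * (1 / 2) - (1 / 2) ^ 2 -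
      2 * (1 / 2) * signInfo (poissonVec fun _ => r) (signLikelihood δ)) *
      (t * Real.exp (-2 * t)) := by
    have h6 : (1 / 4 : ℝ) ≤ 2 * (1 / 2) - (1 / 2) ^ 2 -
      2 * (1 / 2) * signInfo (poissonVec fun _ => r) (signLikelihood δ) := by linarith
    exact mul_le_mul (mul_le_mul_of_nonneg_left h6 (by positivity))
      (mul_le_mul_of_nonneg_left h3 t.2) (by positivity)
      (mul_nonneg (by positivity) (by linarith))
  linarith

/-- Gain of information when the number of samples grows from `n` to `n + m`, in a cell pair of
probability `1 / d`. -/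
lemma signInfo_gain_ge {n m d : ℕ} (hn : 1 ≤ n) (hd : 1 ≤ d) (h0 : 0 ≤ δ) (h1 : δ < 1)
    (hδ : δ ^ 2 = d / (8 * n)) :
    (min m n : ℕ) / (384 * n : ℝ) ≤
      signInfo (poissonVec fun _ => ((n + m : ℕ) : ℝ≥0) * (1 / (2 * d))) (signLikelihood δ) -
        signInfo (poissonVec fun _ => (n : ℝ≥0) * (1 / (2 * d))) (signLikelihood δ) := by
  have hn0 : (0 : ℝ) < n := by exact_mod_cast hn
  have hd0 : (0 : ℝ) < d := by exact_mod_cast hd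
  set e : ℕ → ℝ := fun i =>
    signInfo (poissonVec fun _ => (i : ℝ≥0) * (1 / (2 * d))) (signLikelihood δ) with he
  have hsucc : ∀ i : ℕ, ((i + 1 : ℕ) : ℝ≥0) * (1 / (2 * d)) =
      (i : ℝ≥0) * (1 / (2 * d)) + 1 / (2 * d) := fun i => by push_cast; ring
  have hmono : Monotone e := monotone_nat_of_le_succ fun i => by
    simp only [he, hsucc]
    exact signInfo_mono _ _ h0 h1
  have hstep : ∀ i ≤ 2 * n, e i + 1 / (384 * n) ≤ e (i + 1) := by
    intro i hi
    have hi' : (i : ℝ) ≤ 2 * n := by exact_mod_cast hi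
    have h := signInfo_add_ge_of_le_half ((i : ℝ≥0) * (1 / (2 * d))) (1 / (2 * d)) h0 h1 (by
        have : (1 : ℝ≥0) ≤ d := by exact_mod_cast hd
        gcongr
        simpa using this) (by
        push_cast
        rw [hδ]
        calc 4 * ((i : ℝ) * (1 / (2 * d))) * (d / (8 * n)) = i / (4 * n) := by
              field_simp; ring
          _ ≤ 2 * n / (4 * n) := by gcongr
          _ ≤ 1 / 2 := by field_simp; norm_num)
    simp only [he, hsucc]
    refine le_trans (le_of_eq ?_) h
    congr 1
    push_cast
    rw [hδ]
    field_simp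
    norm_num
  have hind : ∀ j ≤ n, e n + j / (384 * n) ≤ e (n + j) := by
    intro j
    induction j with
    | zero => simp
    | succ j ih =>
      intro hj
      have h2 := ih (by omega)
      have h3 := hstep (n + j) (by omega)
      rw [← add_assoc]
      push_cast
      rw [add_div]
      linarith
  have h2 := hind (min m n) (min_le_right _ _)
  have h3 := hmono (show n + min m n ≤ n + m by omega)
  change _ ≤ e (n + m) - e n
  linarith

end InfoGain

section Embedding

variable {κ ι : Type*} [Fintype κ] [Fintype ι]

/-- Poisson vectors on `κ` extended by zero along an injection are Poisson vectors on `ι`. -/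
lemma poissonVec_map_extend {e : κ → ι} (he : e.Injective) (α : κ → ℝ≥0) :
    (poissonVec α).map (fun y => Function.extend e y (0 : ι → ℕ)) =
      poissonVec (Function.extend e α 0) := by
  refine Measure.ext_of_singleton fun x => ?_
  rw [Measure.map_apply Measurable.of_discrete (measurableSet_singleton _)]
  by_cases hx : ∀ i ∉ Set.range e, x i = 0
  · have hpre : (fun y : κ → ℕ => Function.extend e y 0) ⁻¹' {x} = {x ∘ e} := by
      ext y
      simp only [Set.mem_preimage, Set.mem_singleton_iff]
      constructor
      · rintro rfl
        exact (Function.extend_comp he y 0).symm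
      · rintro rfl
        funext i
        by_cases hi : i ∈ Set.range e
        · obtain ⟨j, rfl⟩ := hi
          simp [he.extend_apply]
        · rw [Function.extend_apply' _ _ _ (by simpa using hi), hx i hi, Pi.zero_apply]
    rw [hpre, poissonVec, poissonVec, Measure.pi_singleton, Measure.pi_singleton]
    refine Fintype.prod_of_injective e he _ _ (fun i hi => ?_) fun j => ?_
    · rw [Function.extend_apply' _ _ _ (by simpa using hi), hx i hi]
      simp [poissonMeasure_singleton]
    · simp [he.extend_apply]
  · push Not at hx
    obtain ⟨i, hi, hxi⟩ := hx
    have hpre : (fun y : κ → ℕ => Function.extend e y 0) ⁻¹' {x} = ∅ := by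
      ext y
      simp only [Set.mem_preimage, Set.mem_singleton_iff, Set.mem_empty_iff_false, iff_false]
      rintro rfl
      exact hxi (Function.extend_apply' _ _ _ (by simpa using hi))
    rw [hpre, measure_empty, poissonVec, Measure.pi_singleton, eq_comm,
      Finset.prod_eq_zero_iff]
    refine ⟨i, Finset.mem_univ _, ?_⟩
    rw [Function.extend_apply' _ _ _ (by simpa using hi)]
    simp [poissonMeasure_singleton, hxi]

lemma pi_poissonVec_map_uncurry {σ : Type*} [Fintype σ] (α : κ → σ → ℝ≥0) :
    (Measure.pi fun j => poissonVec (α j)).map Function.uncurry =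
      poissonVec (Function.uncurry α) := by
  refine Measure.ext_of_singleton fun x => ?_
  have hpre : (Function.uncurry : (κ → σ → ℕ) → κ × σ → ℕ) ⁻¹' {x} = {Function.curry x} := by
    ext y
    simp only [Set.mem_preimage, Set.mem_singleton_iff]
    constructor
    · rintro rfl
      rfl
    · rintro rfl
      rfl
  rw [Measure.map_apply Measurable.of_discrete (measurableSet_singleton _), hpre,
    Measure.pi_singleton, poissonVec, Measure.pi_singleton, Fintype.prod_prod_type]
  refine Finset.prod_congr rfl fun j _ => ?_
  rw [poissonVec, Measure.pi_singleton]
  rfl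

end Embedding

section Assembly

/-- The perturbed uniform distribution on `d` cell pairs, placed in `ι` along `e`. -/
noncomputable def signDist {ι : Type*} {d : ℕ} (e : Fin d × Bool → ι) (δ : ℝ) (s : Fin d → Bool) :
    ι → ℝ≥0 :=
  Function.extend e (fun p => 1 / (2 * d) * signRate δ (s p.1) p.2) 0

lemma sum_signDist {ι : Type*} [Fintype ι] {d : ℕ} (hd : 1 ≤ d) {e : Fin d × Bool → ι}
    (he : e.Injective) {δ : ℝ} (h0 : 0 ≤ δ) (h1 : δ < 1) (s : Fin d → Bool) :
    ∑ i, signDist e δ s i = 1 := by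
  have hs : ∑ p : Fin d × Bool, (1 / (2 * d) * signRate δ (s p.1) p.2 : ℝ≥0) =
      ∑ i, signDist e δ s i := by
    refine Fintype.sum_of_injective e he _ _ (fun i hi => ?_) fun j => ?_
    · exact Function.extend_apply' _ _ _ (by simpa using hi)
    · exact (he.extend_apply (fun p => 1 / (2 * d) * signRate δ (s p.1) p.2) 0 j).symm
  have h2 : ∀ b, signRate δ b true + signRate δ b false = 2 := fun b => by
    apply NNReal.coe_injective
    push_cast
    rw [coe_signRate h0 h1, coe_signRate h0 h1]
    cases b <;> simp [boolSign] <;> ring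
  rw [← hs, Fintype.sum_prod_type]
  simp only [Fintype.sum_bool, ← mul_add, h2, Finset.sum_const, Finset.card_univ, Fintype.card_fin,
    nsmul_eq_mul]
  have : (d : ℝ≥0) ≠ 0 := by positivity
  field_simp

lemma pi_densityMeasure_map_extend {ι : Type*} [Fintype ι] {d : ℕ} {e : Fin d × Bool → ι}
    (he : e.Injective) {δ : ℝ} (h0 : 0 ≤ δ) (h1 : δ < 1) (s : Fin d → Bool) (n : ℕ) :
    (Measure.pi fun j => densityMeasure (poissonVec fun _ => (n : ℝ≥0) * (1 / (2 * d)))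
        (signLikelihood δ (s j))).map
      (fun y => Function.extend e (Function.uncurry y) (0 : ι → ℕ)) =
      poissonVec (n • signDist e δ s) := by
  simp only [densityMeasure_signLikelihood _ h0 h1]
  rw [show (fun y : Fin d → Bool → ℕ => Function.extend e (Function.uncurry y) 0) =
      (fun y => Function.extend e y (0 : ι → ℕ)) ∘ Function.uncurry from rfl,
    ← Measure.map_map Measurable.of_discrete Measurable.of_discrete, pi_poissonVec_map_uncurry,
    poissonVec_map_extend he]
  congr 1
  funext i
  by_cases hi : i ∈ Set.range e
  · obtain ⟨p, rfl⟩ := hi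
    simp [signDist, he.extend_apply, Function.uncurry, mul_assoc]
  · simp [signDist, Function.extend_apply' _ _ _ (show ¬∃ p, e p = i by simpa using hi)]

lemma le_of_amplification {ι : Type*} [Fintype ι] {n m d : ℕ} (hn : 1 ≤ n) (hd : 1 ≤ d)
    (hdn : d ≤ n) {e : Fin d × Bool → ι} (he : e.Injective) (K : Kernel (ι → ℕ) (ι → ℕ))
    [IsMarkovKernel K] {ε : ℝ}
    (hK : ∀ q : {q : ι → ℝ≥0 // ∑ j, q j = 1},
      tvDist (poissonVec ((n + m) • q.1)) ((poissonVec (n • q.1)).bind K) ≤ ε)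
    (hm : n * √d ≤ d * (min m n : ℕ)) : (1 / 768 : ℝ) ^ 2 / 10 ≤ ε := by
  have hn0 : (0 : ℝ) < n := by exact_mod_cast hn
  have hd0 : (0 : ℝ) < d := by exact_mod_cast hd
  have hdn' : (d : ℝ) ≤ n := by exact_mod_cast hdn
  set δ : ℝ := √(d / (8 * n)) with hδ
  have h0 : 0 ≤ δ := Real.sqrt_nonneg _
  have h2 : δ ^ 2 = d / (8 * n) := Real.sq_sqrt (by positivity)
  have h1 : δ < 1 := by
    rw [hδ, Real.sqrt_lt' one_pos, div_lt_iff₀ (by positivity)]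
    linarith
  set E : (Fin d → Bool → ℕ) → ι → ℕ := fun y => Function.extend e (Function.uncurry y) 0 with hE
  let R : (ι → ℕ) → Fin d → Bool → ℕ := fun x j b => x (e (j, b))
  have hRE : R ∘ E = id := by
    funext y j b
    simp [R, hE, he.extend_apply]
  have mE : Measurable E := Measurable.of_discrete
  have mR : Measurable R := Measurable.of_discrete
  let K' : Kernel (Fin d → Bool → ℕ) (Fin d → Bool → ℕ) := (K.comap E mE).map R
  have hK' : IsMarkovKernel K' := Kernel.IsMarkovKernel.map _ mR
  have hprob : ∀ (l : ℕ) (b : Bool), IsProbabilityMeasure (densityMeasure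
      (poissonVec fun _ => (l : ℝ≥0) * (1 / (2 * d))) (signLikelihood δ b)) := fun l b => by
    rw [densityMeasure_signLikelihood _ h0 h1]
    infer_instance
  refine sq_signInfo_gain_le (ι := Fin d)
    (B := poissonVec fun _ => (n : ℝ≥0) * (1 / (2 * d)))
    (B' := poissonVec fun _ => ((n + m : ℕ) : ℝ≥0) * (1 / (2 * d)))
    (p := signLikelihood δ) (fun b v => (signLikelihood_pos h0 h1 b v).le)
    (hprob n) (hprob (n + m)) K' (fun s => ?_) (by norm_num) (by norm_num) (by simpa using hd) ?_
  · have hsrc := pi_densityMeasure_map_extend he h0 h1 s n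
    have htgt := pi_densityMeasure_map_extend he h0 h1 s (n + m)
    set W := Measure.pi fun j => densityMeasure
      (poissonVec fun _ => (n : ℝ≥0) * (1 / (2 * d))) (signLikelihood δ (s j))
    set W' := Measure.pi fun j => densityMeasure
      (poissonVec fun _ => ((n + m : ℕ) : ℝ≥0) * (1 / (2 * d))) (signLikelihood δ (s j))
    have e1 : W' = (poissonVec ((n + m) • signDist e δ s)).map R := by
      rw [← htgt, Measure.map_map mR mE, hRE, Measure.map_id]
    have e2 : W.bind K' = ((poissonVec (n • signDist e δ s)).bind K).map R := by
      rw [← hsrc]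
      refine Measure.ext fun A hA => ?_
      rw [Measure.bind_apply hA K'.measurable.aemeasurable, Measure.map_apply mR hA,
        Measure.bind_apply (mR hA) K.measurable.aemeasurable,
        lintegral_map (K.measurable_coe (mR hA)) mE]
      refine lintegral_congr fun y => ?_
      rw [Kernel.map_apply' _ mR _ hA, Kernel.comap_apply]
    rw [e1, e2]
    exact (tvDist_map_le _ _ mR).trans (hK ⟨_, sum_signDist hd he h0 h1 s⟩)
  · rw [Fintype.card_fin]
    have h3 := mul_le_mul_of_nonneg_left (signInfo_gain_ge (m := m) hn hd h0 h1 h2) hd0.le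
    refine le_trans ?_ (div_le_div_of_nonneg_right h3 two_pos.le)
    rw [le_div_iff₀ two_pos, ← mul_div_assoc, le_div_iff₀ (by positivity)]
    linarith

lemma mul_sqrt_min_le {n m k d : ℕ} (hn : 1 ≤ n) (hk : 2 ≤ k) (hd : d = min (k / 2) n)
    (hm : 2 * ((n : ℝ) / √k + √n) ≤ m) : n * √d ≤ d * (min m n : ℕ) := by
  have hn0 : (0 : ℝ) < n := by exact_mod_cast hn
  have hk0 : (0 : ℝ) < k := by positivity
  have hd1 : 1 ≤ d := by omega
  have hd0 : (0 : ℝ) < d := by exact_mod_cast hd1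
  have hsd := Real.sqrt_pos.2 hd0
  have hss := Real.mul_self_sqrt hd0.le
  suffices h : (n : ℝ) ≤ √d * (min m n : ℕ) by
    calc (n : ℝ) * √d ≤ √d * (min m n : ℕ) * √d := by gcongr
      _ = √d * √d * (min m n : ℕ) := by ring
      _ = d * (min m n : ℕ) := by rw [hss]
  rcases le_total n m with hnm | hnm
  · rw [min_eq_right hnm]
    have : (1 : ℝ) ≤ √d := Real.one_le_sqrt.2 (by exact_mod_cast hd1)
    nlinarith
  · rw [min_eq_left hnm]
    have hsk := Real.sqrt_pos.2 hk0
    have hsn := Real.sqrt_pos.2 hn0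
    refine le_trans ?_ (mul_le_mul_of_nonneg_left hm hsd.le)
    rcases le_total (k / 2) n with h | h
    · have hkd : (k : ℝ) ≤ 2 ^ 2 * d := by
        have : k ≤ 4 * d := by omega
        exact_mod_cast this
      have hs : √k ≤ 2 * √d := by
        calc √(k : ℝ) ≤ √(2 ^ 2 * d) := Real.sqrt_le_sqrt hkd
          _ = 2 * √d := by rw [Real.sqrt_mul (by positivity), Real.sqrt_sq two_pos.le]
      calc (n : ℝ) = √k * (n / √k) := by field_simp
        _ ≤ 2 * √d * (n / √k) := by gcongr
        _ = √d * (2 * (n / √k)) := by ring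
        _ ≤ √d * (2 * (n / √k + √n)) := by gcongr; linarith
    · have hdn : d = n := by omega
      subst hdn
      have h2 : (0 : ℝ) ≤ d / √k := by positivity
      nlinarith

lemma le_ampErr_poissonizedModel {n m k : ℕ} (hn : 1 ≤ n) (hk : 2 ≤ k)
    (hm : 2 * ((n : ℝ) / √k + √n) ≤ m) :
    (1 / 768 : ℝ) ^ 2 / 10 ≤ ampErr (poissonizedModel k) n m := by
  obtain ⟨d, hd⟩ : ∃ d, d = min (k / 2) n := ⟨_, rfl⟩
  obtain ⟨e⟩ : Nonempty (Fin d × Bool ↪ Fin k) :=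
    Function.Embedding.nonempty_of_card_le (by simp; omega)
  have hne : Nonempty {T : Kernel (Fin n → Fin k → ℕ) (Fin (n + m) → Fin k → ℕ) //
      IsMarkovKernel T} := ⟨⟨Kernel.const _ (Measure.dirac 0), inferInstance⟩⟩
  refine le_ciInf fun T => ?_
  have hT := T.2
  obtain ⟨K, hK, hle⟩ := exists_kernel_poissonVec_tvDist_le T.1
  refine le_of_amplification hn (by omega) (by omega) e.injective K
    (fun q => (hle q).trans (le_ciSup (f := fun q => tvDist
      (Measure.pi fun _ : Fin (n + m) => poissonizedModel k q)
      ((Measure.pi fun _ : Fin n => poissonizedModel k q).bind T.1)) ⟨1, ?_⟩ q))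
    (mul_sqrt_min_le hn hk hd hm)
  rintro _ ⟨q, rfl⟩
  have : IsProbabilityMeasure (poissonizedModel k q) := by
    unfold poissonizedModel
    infer_instance
  exact tvDist_le_one _ _

end Assembly

/-- Poissonized discrete distribution model.
There are absolute constants `c₁, C₁, c₂ > 0` such that for all `n ≥ 1`, `k ≥ 2`,
`m ≥ 0`: (i) if `m ≤ c₁(n/√k + √n)` then `ε*(𝒫, n, m) ≤ 0.1`; and
(ii) if `m ≥ C₁(n/√k + √n)` then `ε*(𝒫, n, m) ≥ c₂`.
That is, an `(n, n+m)` amplification with error `0.1` is possible iff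
`m = O(n/√k + √n)`. -/
theorem poissonized_amplification_complexity :
    ∃ c₁ C₁ c₂ : ℝ, 0 < c₁ ∧ 0 < C₁ ∧ 0 < c₂ ∧
      ∀ (n k m : ℕ), 1 ≤ n → 2 ≤ k →
        (((m : ℝ) ≤ c₁ * ((n : ℝ) / Real.sqrt k + Real.sqrt n) →
            ampErr (poissonizedModel k) n m ≤ 0.1) ∧
          (C₁ * ((n : ℝ) / Real.sqrt k + Real.sqrt n) ≤ (m : ℝ) →
            c₂ ≤ ampErr (poissonizedModel k) n m)) := by
  refine ⟨1 / 80, 2, (1 / 768) ^ 2 / 10, by norm_num, by norm_num, by norm_num,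
    fun n k m hn hk => ⟨fun h => ?_, le_ampErr_poissonizedModel hn hk⟩⟩
  exact ampErr_poissonizedModel_le hn (by omega) h
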